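/- arXiv:2511.08099 — 11 statements merged into one kernel-verified Lean document; each statement's English description precedes it below -/
import Mathlib

section
/- Let k ∈ {7, 8, 10, 11, 12, 13}, let (r₁, a₁) = (16,6), (6,2), (38,12), (20,6), (4,1), (11,3) for k = 7, 8, 10, 11, 12, 13 respectively, and for p ≥ 1 define positive integers r_p, a_p by (r_p + a_p√k)/2 = ((r₁ + a₁√k)/2)^p. Then gcd(a_p, r_p) = 2 if k ∈ {7, 8, 10, 11}; for k = 12, gcd(a_p, r_p) = 2 if p is even and 1 if p is odd; for k = 13, gcd(a_p, r_p) = 2 if 3 divides p and 1 otherwise. -/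
set_option maxHeartbeats 4000000

theorem irr_aux (k : ℤ) (hk : k = 7 ∨ k = 8 ∨ k = 10 ∨ k = 11 ∨ k = 12 ∨ k = 13) :
    Irrational (Real.sqrt (k : ℝ)) := by
  rw [irrational_sqrt_intCast_iff]
  refine ⟨?_, by omega⟩
  rintro ⟨m, hm⟩
  have h1 : m ≤ 3 := by nlinarith [hm, (by omega : k ≤ 13)]
  have h2 : -3 ≤ m := by nlinarith [hm, (by omega : k ≤ 13)]
  interval_cases m <;> omega

theorem coef_aux (s : ℝ) (hs : Irrational s) (x y z w : ℤ)
    (h : (x : ℝ) + y * s = z + w * s) : x = z ∧ y = w := by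
  have hy : y = w := by
    by_contra hne
    have h1 : ((y - w : ℤ) : ℝ) ≠ 0 := by exact_mod_cast sub_ne_zero.mpr hne
    apply hs
    refine ⟨((z - x : ℤ) : ℚ) / ((y - w : ℤ) : ℚ), ?_⟩
    push_cast at h1 ⊢
    rw [div_eq_iff h1]
    linarith
  subst hy
  refine ⟨?_, rfl⟩
  have : (x : ℝ) = z := by linarith
  exact_mod_cast this

theorem gcd_dvd_aux (k r a : ℤ) (h : r ^ 2 - k * a ^ 2 = 4) :
    (a % 2 = 0 → r % 2 = 0 → Int.gcd a r = 2) ∧ (a % 2 = 1 → Int.gcd a r = 1) := by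
  have h1 : ((Int.gcd a r : ℕ) : ℤ) ∣ a := Int.gcd_dvd_left ..
  have h2 : ((Int.gcd a r : ℕ) : ℤ) ∣ r := Int.gcd_dvd_right ..
  have h3 : ((Int.gcd a r : ℕ) : ℤ) ^ 2 ∣ 2 ^ 2 := by
    have : (2 : ℤ) ^ 2 = r ^ 2 - k * a ^ 2 := by rw [h]; norm_num
    rw [this]
    exact dvd_sub (pow_dvd_pow_of_dvd h2 2) (Dvd.dvd.mul_left (pow_dvd_pow_of_dvd h1 2) k)
  have h4 : ((Int.gcd a r : ℕ) : ℤ) ∣ 2 := (Int.pow_dvd_pow_iff (by norm_num)).mp h3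
  have h5 : Int.gcd a r ∣ 2 := by exact_mod_cast h4
  constructor
  · intro ha hr
    have : ((2 : ℕ) : ℤ) ∣ (Int.gcd a r : ℕ) :=
      Int.dvd_coe_gcd (Int.dvd_of_emod_eq_zero ha) (Int.dvd_of_emod_eq_zero hr)
    exact Nat.dvd_antisymm h5 (by exact_mod_cast this)
  · intro ha
    rcases (Nat.dvd_prime Nat.prime_two).mp h5 with h | h
    · exact h
    · rw [h] at h1; omega

/-- For `k ∈ {7,8,10,11,12,13}` and solutions `(r_p, a_p)` of `r² − k·a² = 4` generated by the
fundamental solution `(r₁, a₁)` via `(r_p + a_p√k)/2 = ((r₁ + a₁√k)/2)^p`, the value of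
`gcd(a_p, r_p)` is: `2` for `k ∈ {7,8,10,11}`; for `k = 12`, `2` if `p` is even and `1` if `p`
is odd; for `k = 13`, `2` if `3 ∣ p` and `1` otherwise. -/
theorem gcd_of_pell_solutions
    (k r₁ a₁ : ℤ)
    (hk : (k, r₁, a₁) ∈
      ({(7, 16, 6), (8, 6, 2), (10, 38, 12), (11, 20, 6), (12, 4, 1), (13, 11, 3)} :
        Set (ℤ × ℤ × ℤ)))
    (rseq aseq : ℕ → ℤ)
    (hident : ∀ p : ℕ, 1 ≤ p →
      ((rseq p : ℝ) + (aseq p : ℝ) * Real.sqrt (k : ℝ)) / 2 =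
        (((r₁ : ℝ) + (a₁ : ℝ) * Real.sqrt (k : ℝ)) / 2) ^ p)
    (p : ℕ) (hp : 1 ≤ p) :
    ((k = 7 ∨ k = 8 ∨ k = 10 ∨ k = 11) → Int.gcd (aseq p) (rseq p) = 2) ∧
    (k = 12 → ((Even p → Int.gcd (aseq p) (rseq p) = 2) ∧
               (¬ Even p → Int.gcd (aseq p) (rseq p) = 1))) ∧
    (k = 13 → ((3 ∣ p → Int.gcd (aseq p) (rseq p) = 2) ∧
               (¬ 3 ∣ p → Int.gcd (aseq p) (rseq p) = 1))) := by
  have hk' : (k = 7 ∧ r₁ = 16 ∧ a₁ = 6) ∨ (k = 8 ∧ r₁ = 6 ∧ a₁ = 2) ∨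
      (k = 10 ∧ r₁ = 38 ∧ a₁ = 12) ∨ (k = 11 ∧ r₁ = 20 ∧ a₁ = 6) ∨
      (k = 12 ∧ r₁ = 4 ∧ a₁ = 1) ∨ (k = 13 ∧ r₁ = 11 ∧ a₁ = 3) := by
    simpa using hk
  have hirr := irr_aux k (by omega)
  have hk0 : (0 : ℝ) ≤ (k : ℝ) := by
    have : 0 ≤ k := by omega
    exact_mod_cast this
  have hsq := Real.mul_self_sqrt hk0
  have h1 : rseq 1 = r₁ ∧ aseq 1 = a₁ := by
    apply coef_aux _ hirr
    have := hident 1 le_rfl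
    rw [pow_one] at this
    linarith
  have hstep : ∀ p, 1 ≤ p → 2 * rseq (p + 1) = r₁ * rseq p + k * a₁ * aseq p ∧
      2 * aseq (p + 1) = r₁ * aseq p + a₁ * rseq p := by
    intro p hp
    apply coef_aux _ hirr
    have e1 := hident p hp
    have e2 := hident (p + 1) (by omega)
    rw [pow_succ, ← e1] at e2
    push_cast
    linear_combination 4 * e2 + (aseq p : ℝ) * a₁ * hsq
  have hn1 : r₁ ^ 2 - k * a₁ ^ 2 = 4 := by
    rcases hk' with h | h | h | h | h | h <;> obtain ⟨rfl, rfl, rfl⟩ := h <;> norm_num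
  have hnorm : ∀ p, 1 ≤ p → rseq p ^ 2 - k * aseq p ^ 2 = 4 := by
    intro p hp
    induction p, hp using Nat.le_induction with
    | base => rw [h1.1, h1.2]; exact hn1
    | succ n hn ih =>
      obtain ⟨e1, e2⟩ := hstep n hn
      have : 4 * (rseq (n + 1) ^ 2 - k * aseq (n + 1) ^ 2) = 4 * 4 := by
        calc 4 * (rseq (n + 1) ^ 2 - k * aseq (n + 1) ^ 2)
            = (2 * rseq (n + 1)) ^ 2 - k * (2 * aseq (n + 1)) ^ 2 := by ring
          _ = (r₁ ^ 2 - k * a₁ ^ 2) * (rseq n ^ 2 - k * aseq n ^ 2) := by rw [e1, e2]; ring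
          _ = 4 * 4 := by rw [hn1, ih]
      linarith
  obtain ⟨g2, g1⟩ := gcd_dvd_aux k _ _ (hnorm p hp)
  have hA : (k = 7 ∨ k = 8 ∨ k = 10 ∨ k = 11) →
      ∀ p, 1 ≤ p → aseq p % 2 = 0 ∧ rseq p % 2 = 0 := by
    intro hkk p hp
    induction p, hp using Nat.le_induction with
    | base => omega
    | succ n hn ih =>
      have := hstep n hn
      rcases hk' with h | h | h | h | h | h <;> obtain ⟨rfl, rfl, rfl⟩ := h <;> omega
  have hB : k = 12 → ∀ p, 1 ≤ p → (p % 2 = 1 ∧ rseq p % 4 = 0 ∧ aseq p % 2 = 1) ∨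
      (p % 2 = 0 ∧ rseq p % 4 = 2 ∧ aseq p % 2 = 0) := by
    intro hkk p hp
    obtain ⟨rfl, rfl⟩ : r₁ = 4 ∧ a₁ = 1 := by omega
    subst hkk
    induction p, hp using Nat.le_induction with
    | base => omega
    | succ n hn ih =>
      have := hstep n hn
      omega
  have hC : k = 13 → ∀ p, 1 ≤ p →
      (p % 3 = 1 ∧ aseq p % 2 = 1 ∧ (rseq p - aseq p) % 4 = 0) ∨
      (p % 3 = 2 ∧ aseq p % 2 = 1 ∧ (rseq p + aseq p) % 4 = 0) ∨
      (p % 3 = 0 ∧ aseq p % 2 = 0 ∧ (rseq p + aseq p) % 4 = 2) := by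
    intro hkk p hp
    obtain ⟨rfl, rfl⟩ : r₁ = 11 ∧ a₁ = 3 := by omega
    subst hkk
    induction p, hp using Nat.le_induction with
    | base => omega
    | succ n hn ih =>
      have := hstep n hn
      omega
  refine ⟨fun h => ?_, fun h => ⟨fun h' => ?_, fun h' => ?_⟩, fun h => ⟨fun h' => ?_, fun h' => ?_⟩⟩
  · exact g2 (hA h p hp).1 (hA h p hp).2
  · have := hB h p hp
    rw [Nat.even_iff] at h'
    exact g2 (by omega) (by omega)
  · have := hB h p hp
    rw [Nat.even_iff] at h'
    exact g1 (by omega)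
  · have := hC h p hp
    exact g2 (by omega) (by omega)
  · have := hC h p hp
    exact g1 (by omega)
end

section
/- Let {a, b} be a D(4)-pair with a < b and ab + 4 = r² (r a positive integer), let ε ∈ {+1, −1}, and assume b > a + 4 in the case ε = −1. Then for every integer ν ≥ 1: a divides s_ν² − 4, b divides t_ν² − 4, (s_ν² − 4)/a = (t_ν² − 4)/b, and c_ν^ε := (s_ν² − 4)/a is a positive integer such that a·c_ν^ε + 4 = s_ν² and b·c_ν^ε + 4 = t_ν² are perfect squares. -/
/-- Let `{a, b}` be a `D(4)`-pair with `a < b`, `a*b + 4 = r²`, let `ε ∈ {1, −1}` and assume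
`b > a + 4` in the case `ε = −1`. With sequences `s_ν`, `t_ν` as in the paper, for every
`ν ≥ 1`: `a ∣ s_ν² − 4`, `b ∣ t_ν² − 4`, `(s_ν² − 4)/a = (t_ν² − 4)/b`, and
`c_ν^ε = (s_ν² − 4)/a` is a positive integer with `a*c_ν^ε + 4 = s_ν²` and
`b*c_ν^ε + 4 = t_ν²` perfect squares. -/
theorem c_nu_is_positive_integer_extension
    (a b r : ℤ) (ha : 0 < a) (hab : a < b) (hr : 0 < r) (hr2 : a * b + 4 = r ^ 2)
    (ε : ℤ) (hε : ε = 1 ∨ ε = -1) (hbig : ε = -1 → a + 4 < b)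
    (s t : ℕ → ℤ)
    (hs0 : s 0 = 2) (hs1 : s 1 = r + ε * a)
    (hsrec : ∀ ν : ℕ, s (ν + 2) = r * s (ν + 1) - s ν)
    (ht0 : t 0 = 2 * ε) (ht1 : t 1 = b + ε * r)
    (htrec : ∀ ν : ℕ, t (ν + 2) = r * t (ν + 1) - t ν) :
    ∀ ν : ℕ, 1 ≤ ν →
      a ∣ (s ν) ^ 2 - 4 ∧
      b ∣ (t ν) ^ 2 - 4 ∧
      ((s ν) ^ 2 - 4) / a = ((t ν) ^ 2 - 4) / b ∧
      0 < ((s ν) ^ 2 - 4) / a ∧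
      a * (((s ν) ^ 2 - 4) / a) + 4 = (s ν) ^ 2 ∧
      b * (((s ν) ^ 2 - 4) / a) + 4 = (t ν) ^ 2 := by
  have hr3 : 3 ≤ r := by
    by_contra h
    have h2 : r ≤ 2 := by omega
    nlinarith [mul_pos ha (ha.trans hab)]
  have hs1' : 2 < s 1 := by
    rw [hs1]
    rcases hε with h | h
    · subst h; linarith
    · have hb := hbig h
      subst h
      have : a + 2 < r := by
        by_contra hc
        have hc' : r ≤ a + 2 := by omega
        nlinarith [mul_pos ha (sub_pos.mpr hb)]
      linarith
  have hmono : ∀ n : ℕ, 2 ≤ s n ∧ s n < s (n + 1) := by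
    intro n
    induction n with
    | zero => exact ⟨hs0.ge, by rw [hs0]; exact hs1'⟩
    | succ k ih =>
      obtain ⟨h1, h2⟩ := ih
      refine ⟨by linarith, ?_⟩
      rw [show k + 1 + 1 = k + 2 from rfl, hsrec k]
      nlinarith
  have hε2 : ε ^ 2 = 1 := by
    rcases hε with h | h <;> subst h <;> norm_num
  have key : ∀ n : ℕ, ∃ c c' d : ℤ, s n ^ 2 = 4 + a * c ∧ t n ^ 2 = 4 + b * c ∧
      s (n + 1) ^ 2 = 4 + a * c' ∧ t (n + 1) ^ 2 = 4 + b * c' ∧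
      s n * s (n + 1) = 2 * r + a * d ∧ t n * t (n + 1) = 2 * r + b * d := by
    intro n
    induction n with
    | zero =>
      refine ⟨0, a + b + 2 * ε * r, 2 * ε, ?_, ?_, ?_, ?_, ?_, ?_⟩ <;>
        simp only [zero_add, hs0, hs1, ht0, ht1]
      · norm_num
      · linear_combination 4 * hε2
      · linear_combination a ^ 2 * hε2 - hr2
      · linear_combination r ^ 2 * hε2 - hr2
      · ring
      · linear_combination 2 * r * hε2
    | succ k ih =>
      obtain ⟨c, c', d, h1, h2, h3, h4, h5, h6⟩ := ih
      refine ⟨c', r ^ 2 * c' - 2 * r * d + c, r * c' - d, h3, h4, ?_, ?_, ?_, ?_⟩ <;>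
        rw [show k + 1 + 1 = k + 2 from rfl]
      · rw [hsrec k]; linear_combination r ^ 2 * h3 - 2 * r * h5 + h1
      · rw [htrec k]; linear_combination r ^ 2 * h4 - 2 * r * h6 + h2
      · rw [hsrec k]; linear_combination r * h3 - h5
      · rw [htrec k]; linear_combination r * h4 - h6
  intro n hn
  obtain ⟨c, c', d, h1, h2, -⟩ := key n
  have hs : 2 < s n := by
    obtain ⟨k, rfl⟩ : ∃ k, n = k + 1 := ⟨n - 1, by omega⟩
    have := hmono k
    linarith
  have e1 : s n ^ 2 - 4 = a * c := by linarith
  have e2 : t n ^ 2 - 4 = b * c := by linarith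
  have q1 : (s n ^ 2 - 4) / a = c := by rw [e1]; exact Int.mul_ediv_cancel_left _ ha.ne'
  have q2 : (t n ^ 2 - 4) / b = c := by
    rw [e2]; exact Int.mul_ediv_cancel_left _ (ha.trans hab).ne'
  rw [q1, q2]
  refine ⟨⟨c, e1⟩, ⟨c, e2⟩, rfl, ?_, by linarith, by linarith⟩
  have : 0 < a * c := by nlinarith
  exact pos_of_mul_pos_right this ha.le
end

section
/- Let {a, b} be a D(4)-pair with a < b and ab + 4 = r² (r a positive integer), and let ε ∈ {+1, −1}. Then for every integer ν ≥ 1, c_{ν+1}^ε = a + b + c_ν^ε + (a·b·c_ν^ε + r·s_ν·t_ν)/2 and c_{ν−1}^ε = a + b + c_ν^ε + (a·b·c_ν^ε − r·s_ν·t_ν)/2; in other words, d₊(a, b, c_ν^ε) = c_{ν+1}^ε and d₋(a, b, c_ν^ε) = c_{ν−1}^ε. -/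
/-- Let `{a, b}` be a `D(4)`-pair with `a < b` and `a*b + 4 = r²`, and `ε ∈ {1, −1}`. With
the sequences `s_ν`, `t_ν` and `c_ν^ε = (s_ν² − 4)/a` as in the paper, for every `ν ≥ 1`:
`c_{ν+1}^ε = a + b + c_ν^ε + (a*b*c_ν^ε + r*s_ν*t_ν)/2` and
`c_{ν−1}^ε = a + b + c_ν^ε + (a*b*c_ν^ε − r*s_ν*t_ν)/2`, i.e.
`d₊(a,b,c_ν^ε) = c_{ν+1}^ε` and `d₋(a,b,c_ν^ε) = c_{ν−1}^ε`. -/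
theorem c_seq_regular_up_and_down
    (a b r : ℤ) (ha : 0 < a) (hab : a < b) (hr : 0 < r) (hr2 : a * b + 4 = r ^ 2)
    (ε : ℤ) (hε : ε = 1 ∨ ε = -1)
    (s t : ℕ → ℤ)
    (hs0 : s 0 = 2) (hs1 : s 1 = r + ε * a)
    (hsrec : ∀ ν : ℕ, s (ν + 2) = r * s (ν + 1) - s ν)
    (ht0 : t 0 = 2 * ε) (ht1 : t 1 = b + ε * r)
    (htrec : ∀ ν : ℕ, t (ν + 2) = r * t (ν + 1) - t ν)
    (c : ℕ → ℤ) (hc : ∀ ν : ℕ, c ν = ((s ν) ^ 2 - 4) / a) :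
    ∀ ν : ℕ, 1 ≤ ν →
      2 * c (ν + 1) = 2 * (a + b + c ν) + (a * b * c ν + r * s ν * t ν) ∧
      2 * c (ν - 1) = 2 * (a + b + c ν) + (a * b * c ν - r * s ν * t ν) := by
  have hε2 : ε ^ 2 = 1 := by rcases hε with h | h <;> simp [h]
  have hdiv : ∀ n : ℕ, (∃ k, s n ^ 2 - 4 = a * k) ∧ (∃ k, s (n + 1) ^ 2 - 4 = a * k) ∧
      (∃ k, s n * s (n + 1) - 2 * r = a * k) := by
    intro n
    induction n with
    | zero =>
      refine ⟨⟨0, by rw [hs0]; ring⟩, ⟨b + 2 * ε * r + a, ?_⟩, ⟨2 * ε, ?_⟩⟩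
      · rw [zero_add, hs1]; linear_combination a ^ 2 * hε2 - hr2
      · rw [zero_add, hs0, hs1]; ring
    | succ n ih =>
      obtain ⟨⟨k, hk⟩, ⟨l, hl⟩, ⟨m, hm⟩⟩ := ih
      refine ⟨⟨l, hl⟩, ⟨r ^ 2 * l - 2 * r * m + k, ?_⟩, ⟨r * l - m, ?_⟩⟩
      · rw [hsrec]; linear_combination r ^ 2 * hl - 2 * r * hm + hk
      · rw [hsrec]; linear_combination r * hl - hm
  have hac : ∀ n, a * c n = s n ^ 2 - 4 := by
    intro n
    obtain ⟨k, hk⟩ := (hdiv n).1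
    rw [hc, hk, Int.mul_ediv_cancel_left _ ha.ne']
  have hst : ∀ n : ℕ, 2 * s (n + 1) = r * s n + a * t n ∧ 2 * t (n + 1) = r * t n + b * s n := by
    intro n
    induction n with
    | zero =>
      rw [zero_add, hs0, hs1, ht0, ht1]; constructor <;> ring
    | succ n ih =>
      obtain ⟨h1, h2⟩ := ih
      rw [hsrec, htrec]
      constructor
      · apply mul_left_cancel₀ (two_ne_zero : (2 : ℤ) ≠ 0)
        linear_combination r * h1 - a * h2 - s n * hr2
      · apply mul_left_cancel₀ (two_ne_zero : (2 : ℤ) ≠ 0)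
        linear_combination r * h2 - b * h1 - t n * hr2
  have hinv : ∀ n : ℕ, a * t n ^ 2 - b * s n ^ 2 = 4 * (a - b) := by
    intro n
    induction n with
    | zero => rw [hs0, ht0]; linear_combination 4 * a * hε2
    | succ n ih =>
      obtain ⟨h1, h2⟩ := hst n
      apply mul_left_cancel₀ (four_ne_zero : (4 : ℤ) ≠ 0)
      have e1 : (2 * s (n + 1)) ^ 2 = (r * s n + a * t n) ^ 2 := by rw [h1]
      have e2 : (2 * t (n + 1)) ^ 2 = (r * t n + b * s n) ^ 2 := by rw [h2]
      linear_combination a * e2 - b * e1 + 4 * ih - (a * t n ^ 2 - b * s n ^ 2) * hr2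
  intro ν hν
  obtain ⟨n, rfl⟩ : ∃ n, ν = n + 1 := ⟨ν - 1, by omega⟩
  have h2a : 2 * a ≠ 0 := by positivity
  have A := hac (n + 1)
  have I := hinv (n + 1)
  have h1 := (hst (n + 1)).1
  constructor
  · have B := hac (n + 1 + 1)
    apply mul_left_cancel₀ h2a
    have e1 : (2 * s (n + 1 + 1)) ^ 2 = (r * s (n + 1) + a * t (n + 1)) ^ 2 := by rw [h1]
    linear_combination 4 * B + e1 + a * I - s (n + 1) ^ 2 * hr2 - (4 + 2 * a * b) * A
  · have B := hac n
    rw [Nat.add_sub_cancel]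
    apply mul_left_cancel₀ h2a
    have h3 : 2 * s n = r * s (n + 1) - a * t (n + 1) := by
      have := hsrec n
      linear_combination 2 * this - h1
    have e1 : (2 * s n) ^ 2 = (r * s (n + 1) - a * t (n + 1)) ^ 2 := by rw [h3]
    linear_combination 4 * B + e1 + a * I - s (n + 1) ^ 2 * hr2 - (4 + 2 * a * b) * A
end

section
/- Let {a, b, c} be a D(4)-triple with a < b ≤ 13.92·a, and suppose that {1, 5, a, b} is not a D(4)-quadruple. Then there exist a sign ε ∈ {+1, −1} and an integer ν ≥ 1 such that c = c_ν^ε. -/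
/-- A set of four distinct positive integers such that the product of any two of its distinct
elements increased by `4` is a perfect square. -/
def IsD4Quadruple (a b c d : ℤ) : Prop :=
  0 < a ∧ 0 < b ∧ 0 < c ∧ 0 < d ∧
  a ≠ b ∧ a ≠ c ∧ a ≠ d ∧ b ≠ c ∧ b ≠ d ∧ c ≠ d ∧
  IsSquare (a * b + 4) ∧ IsSquare (a * c + 4) ∧ IsSquare (a * d + 4) ∧
  IsSquare (b * c + 4) ∧ IsSquare (b * d + 4) ∧ IsSquare (c * d + 4)

/-- The sequence `s_ν` attached to a `D(4)`-pair `{a, b}` with `a*b + 4 = r²` and a sign `e`: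
`s₀ = 2`, `s₁ = r + e*a`, `s_{ν+2} = r*s_{ν+1} − s_ν`. -/
def sSeq (r e a : ℤ) : ℕ → ℤ
  | 0 => 2
  | 1 => r + e * a
  | (n + 2) => r * sSeq r e a (n + 1) - sSeq r e a n

def tSeqAux (r e b : ℤ) : ℕ → ℤ
  | 0 => 2 * e
  | 1 => b + e * r
  | (n + 2) => r * tSeqAux r e b (n + 1) - tSeqAux r e b n

theorem aux_step (a b r e : ℤ) (hr2 : a * b + 4 = r ^ 2) (n : ℕ) :
    2 * sSeq r e a (n + 1) = r * sSeq r e a n + a * tSeqAux r e b n ∧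
    2 * tSeqAux r e b (n + 1) = r * tSeqAux r e b n + b * sSeq r e a n := by
  induction n with
  | zero => constructor <;> simp only [sSeq, tSeqAux] <;> ring
  | succ n ih =>
    obtain ⟨h1, h2⟩ := ih
    have e1 : sSeq r e a (n + 1 + 1) = r * sSeq r e a (n + 1) - sSeq r e a n := rfl
    have e2 : tSeqAux r e b (n + 1 + 1) = r * tSeqAux r e b (n + 1) - tSeqAux r e b n := rfl
    rw [e1, e2]
    generalize sSeq r e a (n + 1) = S at *
    generalize tSeqAux r e b (n + 1) = T at *
    generalize sSeq r e a n = s at *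
    generalize tSeqAux r e b n = t at *
    constructor
    · have : 2 * (2 * (r * S - s)) = 2 * (r * S + a * T) := by
        linear_combination r * h1 - a * h2 - s * hr2
      linarith
    · have : 2 * (2 * (r * T - t)) = 2 * (r * T + b * S) := by
        linear_combination r * h2 - b * h1 - t * hr2
      linarith

def QAux (a b r s t : ℤ) : Prop :=
  ∃ e : ℤ, (e = 1 ∨ e = -1) ∧ ∃ n : ℕ, s = sSeq r e a n ∧
    (t = tSeqAux r e b n ∨ t = - tSeqAux r e b n)

theorem QAux.negt {a b r s t : ℤ} (h : QAux a b r s t) : QAux a b r s (-t) := by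
  obtain ⟨e, he, n, h1, h2⟩ := h
  refine ⟨e, he, n, h1, ?_⟩
  rcases h2 with h2 | h2
  · right; rw [h2]
  · left; rw [h2]; ring

theorem QAux.fwd {a b r s t s' t' : ℤ} (hr2 : a * b + 4 = r ^ 2) (h : QAux a b r s' t')
    (h1 : 2 * s = r * s' + a * t') (h2 : 2 * t = r * t' + b * s') : QAux a b r s t := by
  obtain ⟨e, he, n, hs, ht⟩ := h
  rcases ht with ht | ht
  · obtain ⟨g1, g2⟩ := aux_step a b r e hr2 n
    refine ⟨e, he, n + 1, ?_, Or.inl ?_⟩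
    · rw [hs, ht] at h1; linarith
    · rw [hs, ht] at h2; linarith
  · cases n with
    | zero =>
      simp only [sSeq, tSeqAux] at hs ht
      refine ⟨-e, by omega, 1, ?_, Or.inl ?_⟩
      · simp only [sSeq]; rw [hs, ht] at h1; linarith
      · simp only [tSeqAux]; rw [hs, ht] at h2; linarith
    | succ n =>
      obtain ⟨g1, g2⟩ := aux_step a b r e hr2 n
      refine ⟨e, he, n, ?_, Or.inr ?_⟩
      · rw [hs, ht] at h1
        have : 2 * (2 * s) = 2 * (2 * sSeq r e a n) := by
          linear_combination 2 * h1 + r * g1 - a * g2 - sSeq r e a n * hr2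
        linarith
      · rw [hs, ht] at h2
        have : 2 * (2 * t) = 2 * (2 * (- tSeqAux r e b n)) := by
          linear_combination 2 * h2 - r * g2 + b * g1 + tSeqAux r e b n * hr2
        linarith

theorem aux_parity {x y z : ℤ} (h : x ^ 2 - y ^ 2 = 2 * z) : ∃ w, x - y = 2 * w := by
  have h1 : (2 : ℤ) ∣ x ^ 2 - y ^ 2 := ⟨z, h⟩
  have h2 : Even (x ^ 2 - y ^ 2) := even_iff_two_dvd.2 h1
  have h3 : Even (x - y) := by
    rw [Int.even_sub] at h2 ⊢
    simpa [Int.even_pow] using h2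
  obtain ⟨w, hw⟩ := h3
  exact ⟨w, by omega⟩

/-- small bound on the third element at the bottom of the descent -/
theorem aux_c_le (a b c r : ℤ) (ha : 0 < a) (hab : a < b) (hb : 100 * b ≤ 1392 * a)
    (hr : 0 < r) (hr2 : a * b + 4 = r ^ 2)
    (h : (a * c + 4) * (r - 2) ≤ a * (b - a)) : c ≤ 3 := by
  by_contra hc
  have hc : 4 ≤ c := by omega
  have hr3 : 3 ≤ r := by nlinarith
  have h4 : (a * 4 + 4) * (r - 2) ≤ a * (b - a) := by nlinarith [mul_le_mul_of_nonneg_left hc ha.le]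
  by_cases h5 : a ≤ 3
  · have hb41 : b ≤ 41 := by omega
    have hr12 : r ≤ 12 := by nlinarith
    interval_cases a <;> interval_cases r <;> omega
  · have h6 : 100 * a + 21 * (b - a) ≤ 100 * r := by
      have h8 : 0 ≤ (b - a) * (1392 * a - 100 * b) := by
        apply mul_nonneg <;> linarith
      have : (100 * a + 21 * (b - a)) ^ 2 ≤ (100 * r) ^ 2 := by
        nlinarith [mul_pos ha (sub_pos.2 hab)]
      exact abs_le_of_sq_le_sq' this (by linarith) |>.2
    have h7 : (a + 1) * 4 * (100 * a + 21 * (b - a) - 200) ≤ 100 * (a * (b - a)) := by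
      nlinarith
    have h8 : a * (100 * b) ≤ a * (1392 * a) := mul_le_mul_of_nonneg_left hb ha.le
    nlinarith

theorem aux_neg (a b c r s t : ℤ) (ha : 0 < a) (hab : a < b) (hr3 : 3 ≤ r)
    (hr2 : a * b + 4 = r ^ 2) (hc : c < 0) (hs0 : 0 ≤ s) (ht0 : 0 ≤ t)
    (hs : a * c + 4 = s ^ 2) (ht : b * c + 4 = t ^ 2) : QAux a b r s t := by
  have hb4 : b ≤ 4 := by nlinarith [sq_nonneg t]
  have hr4 : r ≤ 4 := by nlinarith
  have key : a = 3 ∧ b = 4 ∧ r = 4 := by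
    have hb1 : 1 < b := by omega
    have ha4 : a < 4 := by omega
    clear hs ht
    interval_cases b <;> interval_cases a <;> interval_cases r <;> omega
  obtain ⟨rfl, rfl, rfl⟩ := key
  have hc1 : c = -1 := by nlinarith [sq_nonneg t]
  subst hc1
  have e1 : s = 1 := by nlinarith
  have e2 : t = 0 := by nlinarith
  exact ⟨-1, Or.inr rfl, 1, by simp [sSeq, e1], Or.inl (by simp [tSeqAux, e2])⟩

theorem aux_n5 (x : ℤ) : x ^ 2 ≠ 5 := by
  intro hx
  have h1 : x < 3 := by nlinarith
  have h2 : -3 < x := by nlinarith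
  interval_cases x <;> omega

theorem aux_n29 (x : ℤ) : x ^ 2 ≠ 29 := by
  intro hx
  have h1 : x < 6 := by nlinarith
  have h2 : -6 < x := by nlinarith
  interval_cases x <;> omega

set_option maxHeartbeats 1000000 in
theorem aux_main (a b r : ℤ) (ha : 0 < a) (hab : a < b) (hb : 100 * b ≤ 1392 * a)
    (hr : 0 < r) (hr2 : a * b + 4 = r ^ 2) (hquad : ¬ IsD4Quadruple 1 5 a b) :
    ∀ N : ℕ, ∀ s t c : ℤ, s.toNat < N → 0 ≤ s → 0 ≤ t → a * c + 4 = s ^ 2 → b * c + 4 = t ^ 2 →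
      QAux a b r s t := by
  intro N
  induction N with
  | zero => intro s t c h; omega
  | succ N ih =>
    intro s t c hN hs0 ht0 hs ht
    have hr3 : 3 ≤ r := by nlinarith
    obtain ⟨s', hs'⟩ := aux_parity (x := r * s) (y := a * t)
      (z := 2 * a * b + 2 * a * c + 8 - 2 * a ^ 2)
      (by rw [mul_pow, mul_pow, ← hs, ← ht, ← hr2]; ring)
    obtain ⟨t', ht'⟩ := aux_parity (x := r * t) (y := b * s)
      (z := 2 * a * b + 2 * b * c + 8 - 2 * b ^ 2)
      (by rw [mul_pow, mul_pow, ← hs, ← ht, ← hr2]; ring)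
    obtain ⟨w, hw⟩ := aux_parity (x := c * r) (y := s * t)
      (z := 2 * c ^ 2 - 2 * a * c - 2 * b * c - 8)
      (by rw [mul_pow, mul_pow, ← hs, ← ht, ← hr2]; ring)
    -- the new element is d = a + b + c + (abc - rst)/2 = a + b - c + r*w
    obtain ⟨d, hd⟩ : ∃ d, d = a + b - c + r * w := ⟨_, rfl⟩
    have hds : a * d + 4 = s' ^ 2 := by
      have : 4 * (a * d + 4) = (2 * s') ^ 2 := by
        rw [hd, ← hs']
        linear_combination (-2 * a * r) * hw + (-2 * a * c + s ^ 2) * hr2 + (a * b + 4) * hs + a ^ 2 * ht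
      linarith
    have hdt : b * d + 4 = t' ^ 2 := by
      have : 4 * (b * d + 4) = (2 * t') ^ 2 := by
        rw [hd, ← ht']
        linear_combination (-2 * b * r) * hw + (-2 * b * c + t ^ 2) * hr2 + (a * b + 4) * ht + b ^ 2 * hs
      linarith
    have hdw : c * d + 4 = w ^ 2 := by
      have : 4 * (c * d + 4) = (2 * w) ^ 2 := by
        rw [hd, ← hw]
        linear_combination (-2 * c * r) * hw - c ^ 2 * hr2 + (b * c + 4) * hs + s ^ 2 * ht
      linarith
    have hs'pos : 0 < s' := by
      have h1 : (a * t) ^ 2 < (r * s) ^ 2 := by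
        rw [mul_pow, mul_pow, ← hr2, ← ht, ← hs]
        nlinarith [sq_nonneg s, mul_pos ha (sub_pos.2 hab)]
      have h2 := abs_lt_of_sq_lt_sq h1 (by positivity)
      have := (abs_lt.1 h2).2
      linarith
    have b1 : 2 * s = r * s' + a * t' := by
      have : 2 * (2 * s) = 2 * (r * s' + a * t') := by
        linear_combination r * hs' + a * ht' + s * hr2
      linarith
    have b2 : 2 * t = r * t' + b * s' := by
      have : 2 * (2 * t) = 2 * (r * t' + b * s') := by
        linear_combination r * ht' + b * hs' + t * hr2
      linarith
    by_cases hlt : s' < s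
    · have hq : QAux a b r s' |t'| := ih s' |t'| d (by omega) hs'pos.le (abs_nonneg _) hds
        (by rw [sq_abs]; exact hdt)
      have hq' : QAux a b r s' t' := by
        rcases abs_choice t' with h | h
        · rwa [h] at hq
        · rw [h] at hq; simpa using hq.negt
      exact hq'.fwd hr2 b1 b2
    · have hge : s ≤ s' := by omega
      have hdc : c ≤ d := by
        have : s ^ 2 ≤ s' ^ 2 := by gcongr
        have : a * c ≤ a * d := by linarith
        exact le_of_mul_le_mul_left this ha
      have hle : (a * c + 4) * (r - 2) ≤ a * (b - a) := by
        have h1 : a * t ≤ (r - 2) * s := by linarith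
        have h2 : (a * t) ^ 2 ≤ ((r - 2) * s) ^ 2 := by gcongr
        rw [mul_pow, mul_pow, ← ht, ← hs] at h2
        have h3 : (r - 2) ^ 2 = a * b + 8 - 4 * r := by linear_combination (-1) * hr2
        rw [h3] at h2
        nlinarith
      have hc3 := aux_c_le a b c r ha hab hb hr hr2 hle
      rcases lt_trichotomy c 0 with hc | hc | hc
      · exact aux_neg a b c r s t ha hab hr3 hr2 hc hs0 ht0 hs ht
      · subst hc
        have e1 : s = 2 := by nlinarith
        have e2 : t = 2 := by nlinarith
        exact ⟨1, Or.inl rfl, 0, by simp [sSeq, e1], Or.inl (by simp [tSeqAux, e2])⟩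
      · exfalso
        have hab16 : a + b < 4 * r := by
          have : (a + b) ^ 2 < (4 * r) ^ 2 := by
            rw [mul_pow, ← hr2]
            nlinarith [mul_nonneg (sub_nonneg.2 hb) (by linarith : 0 ≤ b - a),
              mul_nonneg (sub_nonneg.2 hb) ha.le]
          exact lt_of_pow_lt_pow_left₀ 2 (by linarith) this
        have hst : (s * t) ^ 2 = (a * c + 4) * (b * c + 4) := by rw [mul_pow, hs, ht]
        have hst0 : 0 ≤ s * t := mul_nonneg hs0 ht0
        have hw1 : w < 4 := by
          have : (c * r) ^ 2 ≤ (s * t) ^ 2 := by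
            rw [hst, mul_pow, ← hr2]
            linarith [mul_nonneg hc.le (by omega : 0 ≤ a + b - c)]
          have := abs_le_of_sq_le_sq' this hst0 |>.2
          omega
        have hw2 : -4 < w := by
          have : (s * t) ^ 2 < (8 + c * r) ^ 2 := by
            have : (8 + c * r) ^ 2 = 64 + 16 * (c * r) + c ^ 2 * (a * b + 4) := by
              rw [hr2]; ring
            rw [this, hst]
            linarith [mul_pos hc (by omega : 0 < 4 * r - a - b), sq_nonneg c]
          have := lt_of_pow_lt_pow_left₀ 2 (by positivity) this
          omega
        have hd0 : 0 < d := by omega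
        have hcd : c * d = 5 := by
          have : 0 < c * d := by positivity
          interval_cases w <;> omega
        have hc1 : c = 1 := by interval_cases c <;> omega
        subst hc1
        have hd5 : d = 5 := by omega
        subst hd5
        apply hquad
        refine ⟨by norm_num, by norm_num, ha, by linarith, by norm_num, ?_, ?_, ?_, ?_, hab.ne,
          ⟨3, by norm_num⟩, ⟨s, by linarith⟩, ⟨t, by linarith⟩, ⟨s', by linarith⟩,
          ⟨t', by linarith⟩, ⟨r, by linarith⟩⟩
        · intro h; apply aux_n5 s; rw [← hs, ← h]; norm_num
        · intro h; apply aux_n5 t; rw [← ht, ← h]; norm_num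
        · intro h; apply aux_n29 s'; rw [← hds, ← h]; norm_num
        · intro h; apply aux_n29 t'; rw [← hdt, ← h]; norm_num

/-- Let `{a, b, c}` be a `D(4)`-triple with `a < b ≤ 13.92·a`, and suppose `{1, 5, a, b}` is not
a `D(4)`-quadruple. Then `c = c_ν^ε = (s_ν² − 4)/a` for some sign `ε` and some `ν ≥ 1`. -/
theorem third_element_of_triple_is_c_nu
    (a b c r : ℤ) (ha : 0 < a) (hab : a < b) (hb : (b : ℝ) ≤ 13.92 * (a : ℝ))
    (hc : 0 < c) (hca : c ≠ a) (hcb : c ≠ b)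
    (hr : 0 < r) (hr2 : a * b + 4 = r ^ 2)
    (hac : IsSquare (a * c + 4)) (hbc : IsSquare (b * c + 4))
    (hquad : ¬ IsD4Quadruple 1 5 a b) :
    ∃ ε : ℤ, (ε = 1 ∨ ε = -1) ∧ ∃ ν : ℕ, 1 ≤ ν ∧ a * c = (sSeq r ε a ν) ^ 2 - 4 := by
  have hb' : 100 * b ≤ 1392 * a := by
    have : (100 * b : ℝ) ≤ 1392 * a := by linarith
    exact_mod_cast this
  obtain ⟨s, hs⟩ := hac
  obtain ⟨t, ht⟩ := hbc
  have hs2 : a * c + 4 = |s| ^ 2 := by rw [sq_abs]; linarith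
  have ht2 : b * c + 4 = |t| ^ 2 := by rw [sq_abs]; linarith
  obtain ⟨e, he, n, h1, -⟩ := aux_main a b r ha hab hb' hr hr2 hquad (|s|.toNat + 1) |s| |t| c
    (by omega) (abs_nonneg _) (abs_nonneg _) hs2 ht2
  refine ⟨e, he, n, ?_, by rw [← h1]; linarith⟩
  by_contra h
  have h0 : n = 0 := by omega
  subst h0
  simp only [sSeq] at h1
  rw [h1] at hs2
  have := mul_pos ha hc
  linarith
end

section
/- Let k ∈ {10, 11, 12, 13} and let {a, ka, c} be a D(4)-triple (a a positive integer). Then there exist a sign ε ∈ {+1, −1} and an integer ν ≥ 1 such that c = c_ν^ε, where the sequences are built from the pair {a, ka}. -/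
theorem fin_check : ∀ k : Fin 4, ∀ c : Fin 3, ∀ E : Fin 23, ∀ a : Fin 43,
    (k.val + 10) * (c.val + 1) * 2 * E.val * (a.val + 1) ^ 2
      + (a.val + 1) * (k.val + 11) * (8 * (c.val + 1) + 4 * E.val) + 64
      + 4 * (c.val + 1) * E.val
    ≠ 4 * (k.val + 9) ^ 2 * (a.val + 1) ^ 2 + 4 * (c.val + 1) ^ 2 + E.val ^ 2 := by
  decide +kernel

theorem fin_check' (k c E a : ℤ) (hk : 10 ≤ k) (hk' : k ≤ 13) (hc : 1 ≤ c) (hc' : c ≤ 3)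
    (hE : 0 ≤ E) (hE' : E ≤ 22) (ha : 1 ≤ a) (ha' : a ≤ 43) :
    a ^ 2 * (2 * c * k * E - 4 * (k - 1) ^ 2) + a * (k + 1) * (8 * c + 4 * E)
      + 64 - (2 * c - E) ^ 2 ≠ 0 := by
  intro h
  obtain ⟨k', rfl⟩ : ∃ k' : ℕ, k = k' + 10 := ⟨(k - 10).toNat, by omega⟩
  obtain ⟨c', rfl⟩ : ∃ k' : ℕ, c = k' + 1 := ⟨(c - 1).toNat, by omega⟩
  obtain ⟨E', rfl⟩ : ∃ k' : ℕ, E = k' := ⟨E.toNat, by omega⟩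
  obtain ⟨a', rfl⟩ : ∃ k' : ℕ, a = k' + 1 := ⟨(a - 1).toNat, by omega⟩
  have := fin_check ⟨k', by omega⟩ ⟨c', by omega⟩ ⟨E', by omega⟩ ⟨a', by omega⟩
  apply this
  zify
  linear_combination h

/-- no extension by a small element -/
theorem no_small (k a c r s t : ℤ) (hk : 10 ≤ k) (hk' : k ≤ 13) (hc : 1 ≤ c) (hc' : c ≤ 3)
    (ha : 1 ≤ a) (hr : 0 < r) (hs : 0 < s) (ht : 0 < t) (hr2 : k * a ^ 2 + 4 = r ^ 2)
    (hs2 : a * c + 4 = s ^ 2) (ht2 : k * a * c + 4 = t ^ 2) : False := by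
  obtain ⟨E, hE⟩ : ∃ E : ℤ, E = 2 * (c + a + k * a) + c * k * a ^ 2 - r * s * t := ⟨_, rfl⟩
  have hrst : 0 < r * s * t := by positivity
  have hP : a ^ 2 * (2 * c * k * E - 4 * (k - 1) ^ 2) + a * (k + 1) * (8 * c + 4 * E)
      + 64 - (2 * c - E) ^ 2 = 0 := by
    have h1 : (r * s * t) ^ 2 = (k * a ^ 2 + 4) * (a * c + 4) * (k * a * c + 4) := by
      rw [hr2, hs2, ht2]; ring
    have h2 : r * s * t = 2 * (c + a + k * a) + c * k * a ^ 2 - E := by rw [hE]; ring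
    rw [h2] at h1
    linear_combination -h1
  have hEu : E < 2 * (c + a + k * a) + c * k * a ^ 2 := by linarith
  clear hE hrst hr2 hs2 ht2
  have haa : 1 ≤ a ^ 2 := by nlinarith
  have haa' : a ≤ a ^ 2 := by nlinarith
  have h0 : 0 ≤ E := by
    by_contra hneg
    push Not at hneg
    have h3 : E * (2 * (2 * (c + a + k * a) + c * k * a ^ 2) - E) < 0 :=
      mul_neg_of_neg_of_pos hneg (by nlinarith [mul_pos (show 0 < k by linarith) (show 0 < a by linarith), mul_pos (mul_pos (show 0 < c by linarith) (show 0 < k by linarith)) (show 0 < a ^ 2 by linarith)])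
    have h4 : -4 * (k - 1) ^ 2 * a ^ 2 + 8 * c * (k + 1) * a + 64 - 4 * c ^ 2 < 0 := by
      interval_cases k <;> interval_cases c <;> linarith
    nlinarith
  by_cases h22 : E ≤ 22
  · by_cases ha' : a ≤ 43
    · exact fin_check' k c E a hk hk' hc hc' h0 h22 ha ha' hP
    · push Not at ha'
      have h5 : 44 * a ≤ a ^ 2 := by nlinarith
      clear hEu
      have br : ∀ n : ℤ, 44 ≤ n → (a ^ 2 ≤ (n + 44) * a - 44 * n ∧ a ≤ n) ∨
          ((n + 1) * a ≤ a ^ 2 ∧ n + 1 ≤ a) := by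
        intro n hn
        rcases le_or_gt a n with h | h
        · left; exact ⟨by nlinarith, h⟩
        · right; exact ⟨by nlinarith, h⟩
      interval_cases k <;> interval_cases c <;> interval_cases E <;> first
        | linarith
        | (rcases br 197 (by norm_num) with ⟨h, h'⟩ | ⟨h, h'⟩ <;> linarith)
        | (rcases br 132 (by norm_num) with ⟨h, h'⟩ | ⟨h, h'⟩ <;> linarith)
        | (rcases br 239 (by norm_num) with ⟨h, h'⟩ | ⟨h, h'⟩ <;> linarith)
        | (rcases br 156 (by norm_num) with ⟨h, h'⟩ | ⟨h, h'⟩ <;> linarith)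
        | (rcases br 144 (by norm_num) with ⟨h, h'⟩ | ⟨h, h'⟩ <;> linarith)
        | (rcases br 285 (by norm_num) with ⟨h, h'⟩ | ⟨h, h'⟩ <;> linarith)
        | (rcases br 182 (by norm_num) with ⟨h, h'⟩ | ⟨h, h'⟩ <;> linarith)
        | (rcases br 335 (by norm_num) with ⟨h, h'⟩ | ⟨h, h'⟩ <;> linarith)
        | (rcases br 210 (by norm_num) with ⟨h, h'⟩ | ⟨h, h'⟩ <;> linarith)
  · push Not at h22
    have h23 : 0 ≤ (E - 23) * (2 * (2 * (c + a + k * a) + c * k * a ^ 2) - E - 23) := by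
      apply mul_nonneg (by linarith)
      interval_cases k <;> interval_cases c <;> linarith
    interval_cases k <;> interval_cases c <;> nlinarith

theorem min_lemma (k a c r s t : ℤ) (hk : 10 ≤ k) (hk' : k ≤ 13) (hc : 0 ≤ c)
    (ha : 1 ≤ a) (hr : 0 < r) (hs : 0 < s) (ht : 0 < t) (hr2 : k * a ^ 2 + 4 = r ^ 2)
    (hs2 : a * c + 4 = s ^ 2) (ht2 : k * a * c + 4 = t ^ 2)
    (h : 2 * s ≤ r * s - a * t) : c = 0 := by
  by_contra hne
  have hc1 : 1 ≤ c := by omega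
  refine no_small k a c r s t hk hk' hc1 ?_ ha hr hs ht hr2 hs2 ht2
  have h3a : 3 * a + 1 ≤ r := by nlinarith
  have h1 : (a * t) ^ 2 ≤ ((r - 2) * s) ^ 2 := by
    apply pow_le_pow_left₀ (by positivity); linarith
  have h2 : 0 ≤ a ^ 2 * (k - 1) - (r - 2) * (a * c + 4) := by
    have e : 4 * (a ^ 2 * (k - 1) - (r - 2) * (a * c + 4))
      = ((r - 2) * s) ^ 2 - (a * t) ^ 2 := by
      rw [mul_pow, mul_pow, ← hs2, ← ht2]
      linear_combination (a * c + 4) * hr2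
    linarith
  by_contra hc4
  push Not at hc4
  have h5 : a * 4 ≤ a * c := by nlinarith
  have h6 : (3 * a - 1) * (4 * a + 4) ≤ (r - 2) * (a * c + 4) := by
    apply mul_le_mul <;> nlinarith
  nlinarith [sq_nonneg a]

def tSeq (r e b : ℤ) : ℕ → ℤ
  | 0 => 2 * e
  | 1 => b + e * r
  | (n + 2) => r * tSeq r e b (n + 1) - tSeq r e b n

theorem step (k a r e : ℤ) (hr2 : k * a ^ 2 + 4 = r ^ 2) (n : ℕ) :
    2 * sSeq r e a (n + 1) = r * sSeq r e a n + a * tSeq r e (k * a) n ∧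
    2 * tSeq r e (k * a) (n + 1) = r * tSeq r e (k * a) n + k * a * sSeq r e a n := by
  induction n with
  | zero => simp only [sSeq, tSeq]; constructor <;> ring
  | succ n ih =>
    obtain ⟨h1, h2⟩ := ih
    simp only [sSeq, tSeq]
    constructor
    · refine mul_left_cancel₀ (two_ne_zero (α := ℤ)) ?_
      linear_combination r * h1 - a * h2 - sSeq r e a n * hr2
    · refine mul_left_cancel₀ (two_ne_zero (α := ℤ)) ?_
      linear_combination r * h2 - k * a * h1 - tSeq r e (k * a) n * hr2

set_option maxHeartbeats 2000000 in
theorem main_desc (k a r : ℤ) (hk : 10 ≤ k) (hk' : k ≤ 13) (ha : 1 ≤ a) (hr : 0 < r)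
    (hr2 : k * a ^ 2 + 4 = r ^ 2) (N : ℕ) : ∀ c s t : ℤ, s.toNat ≤ N → 0 ≤ c → 0 < s → 0 < t →
    a * c + 4 = s ^ 2 → k * a * c + 4 = t ^ 2 →
    ∃ ε : ℤ, (ε = 1 ∨ ε = -1) ∧ ∃ n : ℕ, s = sSeq r ε a n ∧ t = tSeq r ε (k * a) n := by
  induction N with
  | zero => intro c s t h0 _ hs; omega
  | succ N ih =>
    intro c s t hN hc hs ht hs2 ht2
    rcases hc.eq_or_lt with rfl | hc0
    · refine ⟨1, Or.inl rfl, 0, ?_, ?_⟩ <;> simp only [sSeq, tSeq] <;> nlinarith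
    have hlt : r * s - a * t < 2 * s := by
      by_contra hh
      push Not at hh
      have := min_lemma k a c r s t hk hk' hc ha hr hs ht hr2 hs2 ht2 hh
      omega
    have ev1 : Even (r * s - a * t) := by
      have e1 := congrArg Even hr2
      have e2 := congrArg Even hs2
      have e3 := congrArg Even ht2
      have f4 : Even (4 : ℤ) := by decide
      simp only [Int.even_add, Int.even_mul, Int.even_pow, Int.even_sub, f4] at *
      grind
    have ev2 : Even (r * t - k * a * s) := by
      have e1 := congrArg Even hr2
      have e2 := congrArg Even hs2
      have e3 := congrArg Even ht2
      have f4 : Even (4 : ℤ) := by decide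
      simp only [Int.even_add, Int.even_mul, Int.even_pow, Int.even_sub, f4] at *
      grind
    have ev3 : Even (k * a ^ 2 * c - r * s * t) := by
      have e1 := congrArg Even hr2
      have e2 := congrArg Even hs2
      have e3 := congrArg Even ht2
      have f4 : Even (4 : ℤ) := by decide
      simp only [Int.even_add, Int.even_mul, Int.even_pow, Int.even_sub, f4] at *
      grind
    obtain ⟨s', hs'⟩ := ev1
    obtain ⟨t', ht'⟩ := ev2
    obtain ⟨d, hd⟩ := ev3
    obtain ⟨c', hc'⟩ : ∃ c', c' = c + a + k * a + d := ⟨_, rfl⟩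
    have hs2' : a * c' + 4 = s' ^ 2 := by
      have : 4 * s' ^ 2 = (r * s - a * t) ^ 2 := by rw [hs']; ring
      have h4 : 4 * (a * c' + 4) = 4 * s' ^ 2 := by
        rw [this, hc']
        linear_combination (-2 * a) * hd + (s ^ 2) * hr2 + (k * a ^ 2 + 4) * hs2 + a ^ 2 * ht2
      linarith
    have ht2' : k * a * c' + 4 = t' ^ 2 := by
      have : 4 * t' ^ 2 = (r * t - k * a * s) ^ 2 := by rw [ht']; ring
      have h4 : 4 * (k * a * c' + 4) = 4 * t' ^ 2 := by
        rw [this, hc']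
        linear_combination (-2 * k * a) * hd + (t ^ 2) * hr2 + (k * a ^ 2 + 4) * ht2 + k ^ 2 * a ^ 2 * hs2
      linarith
    have hs'pos : 0 < s' := by
      have : (a * t) ^ 2 < (r * s) ^ 2 := by
        rw [mul_pow, mul_pow, ← hr2, ← hs2, ← ht2]
        nlinarith [mul_pos (show 0 < a by linarith) hc0, sq_nonneg a, mul_nonneg (show 0 ≤ k - 1 by linarith) (sq_nonneg a)]
      have := lt_of_pow_lt_pow_left₀ 2 (by positivity) this
      linarith
    have hc'0 : 0 ≤ c' := by
      by_contra hneg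
      push Not at hneg
      have : a * c' ≤ -1 := by nlinarith
      nlinarith [sq_nonneg t']
    have es : 2 * s = r * s' + a * t' := by
      refine mul_left_cancel₀ (two_ne_zero (α := ℤ)) ?_
      linear_combination r * hs' + a * ht' + s * hr2
    have et : 2 * t = r * t' + k * a * s' := by
      refine mul_left_cancel₀ (two_ne_zero (α := ℤ)) ?_
      linear_combination r * ht' + k * a * hs' + t * hr2
    have ht'0 : t' ≠ 0 := by
      rintro rfl
      have : 0 ≤ k * a * c' := by positivity
      linarith
    rcases lt_or_gt_of_ne ht'0 with hneg | hpos
    · have hz : c' = 0 := by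
        refine min_lemma k a c' r s' (-t') hk hk' hc'0 ha hr hs'pos (by linarith) hr2 hs2'
          (by rw [ht2']; ring) ?_
        linarith
      rw [hz] at hs2' ht2'
      have q1 : s' = 2 := by
        have : (s' - 2) * (s' + 2) = 0 := by linear_combination -hs2'
        rcases mul_eq_zero.mp this with h | h <;> linarith
      have q2 : t' = -2 := by
        have : (t' - 2) * (t' + 2) = 0 := by linear_combination -ht2'
        rcases mul_eq_zero.mp this with h | h <;> linarith
      subst q1 q2
      refine ⟨-1, Or.inr rfl, 1, ?_, ?_⟩ <;> simp only [sSeq, tSeq] <;> linarith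
    · obtain ⟨ε, hε, n, h1, h2⟩ := ih c' s' t' (by omega) hc'0 hs'pos hpos hs2' ht2'
      obtain ⟨g1, g2⟩ := step k a r ε hr2 n
      rw [← h1, ← h2] at g1 g2
      exact ⟨ε, hε, n + 1, by linarith, by linarith⟩

/-- For `k ∈ {10,11,12,13}`, if `{a, ka, c}` is a `D(4)`-triple then
`c = c_ν^ε = (s_ν² − 4)/a` for some sign `ε` and some `ν ≥ 1`, where the sequences are built
from the pair `{a, ka}`. -/
theorem third_element_of_a_ka_triple_is_c_nu
    (k a c r : ℤ) (hk : k ∈ ({10, 11, 12, 13} : Set ℤ)) (ha : 0 < a)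
    (hc : 0 < c) (hca : c ≠ a) (hcb : c ≠ k * a)
    (hr : 0 < r) (hr2 : a * (k * a) + 4 = r ^ 2)
    (hac : IsSquare (a * c + 4)) (hbc : IsSquare ((k * a) * c + 4)) :
    ∃ ε : ℤ, (ε = 1 ∨ ε = -1) ∧ ∃ ν : ℕ, 1 ≤ ν ∧ a * c = (sSeq r ε a ν) ^ 2 - 4 := by
  obtain ⟨s, hs⟩ := hac
  obtain ⟨t, ht⟩ := hbc
  have hkk : 10 ≤ k ∧ k ≤ 13 := by
    simp only [Set.mem_insert_iff, Set.mem_singleton_iff] at hk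
    omega
  have hac0 : 0 < a * c := by positivity
  have hk0 : 0 < k := by linarith [hkk.1]
  have hkac0 : 0 < k * a * c := by positivity
  have hs0 : 0 < |s| := by
    apply abs_pos.mpr; rintro rfl; linarith
  have ht0 : 0 < |t| := by
    apply abs_pos.mpr; rintro rfl; linarith
  obtain ⟨ε, hε, n, h1, -⟩ := main_desc k a r hkk.1 hkk.2 ha hr (by rw [← hr2]; ring) _ c |s| |t|
    le_rfl hc.le hs0 ht0 (by rw [sq_abs, hs]; ring) (by rw [sq_abs, ht]; ring)
  have hh : a * c = sSeq r ε a n ^ 2 - 4 := by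
    rw [← h1, sq_abs]; linarith
  refine ⟨ε, hε, n, ?_, hh⟩
  rcases Nat.eq_zero_or_pos n with rfl | h
  · simp only [sSeq] at hh; linarith
  · exact h
end

section
/- For a positive integer a, the set {1, 5, a, 7a} is a D(4)-quadruple if and only if a = 96. -/
open scoped NumberTheorySymbols

/-- Lucas numbers `L_{2i}` as Chebyshev values. -/
noncomputable def VV (i : ℤ) : ℤ := (Polynomial.Chebyshev.C ℤ i).eval 3

lemma VV_mul (m k : ℤ) : VV m * VV k = VV (m + k) + VV (m - k) := by
  unfold VV
  rw [← Polynomial.eval_mul, Polynomial.Chebyshev.C_mul_C, Polynomial.eval_add]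

lemma VV_neg (m : ℤ) : VV (-m) = VV m := by
  unfold VV; rw [Polynomial.Chebyshev.C_neg]

lemma VV_zero : VV 0 = 2 := by simp [VV]

lemma VV_one : VV 1 = 3 := by simp [VV]

lemma VV_add_two (m : ℤ) : VV (m + 2) = 3 * VV (m + 1) - VV m := by
  simp [VV, Polynomial.Chebyshev.C_add_two]

lemma VV_dbl (m : ℤ) : VV (2 * m) = VV m ^ 2 - 2 := by
  have := VV_mul m m
  rw [sub_self, VV_zero, ← two_mul] at this
  linarith

def vp : ℕ → ℤ × ℤ
  | 0 => (2, 3)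
  | n + 1 => ((vp n).2, 3 * (vp n).2 - (vp n).1)

lemma vp_eq (n : ℕ) : vp n = (VV n, VV (n + 1)) := by
  induction n with
  | zero => simp [vp, VV_zero, VV_one]
  | succ n ih =>
    have := VV_add_two n
    simp only [vp, ih]
    push_cast
    rw [← this]
    congr 2

lemma VV_nat (n : ℕ) : VV n = (vp n).1 := by rw [vp_eq]

lemma VV_shift (x h : ℤ) : VV h ∣ VV (x + 2 * h) + VV x := by
  have := VV_mul (x + h) h
  rw [show x + h + h = x + 2 * h by ring, show x + h - h = x by ring] at this
  exact ⟨VV (x + h), by rw [← this]; ring⟩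

lemma VV_odd_shift (x h : ℤ) (k : ℕ) : VV h ∣ VV (x + 2 * h * (2 * k + 1)) + VV x := by
  induction k with
  | zero => simpa using VV_shift x h
  | succ k ih =>
    have h1 := VV_shift (x + 2 * h * (2 * k + 1)) h
    have h2 := VV_shift (x + 2 * h * (2 * k + 1) + 2 * h) h
    have : VV (x + 2 * h * (2 * (k + 1 : ℕ) + 1)) + VV x =
      (VV (x + 2 * h * (2 * k + 1) + 2 * h + 2 * h) + VV (x + 2 * h * (2 * k + 1) + 2 * h))
      - (VV (x + 2 * h * (2 * k + 1) + 2 * h) + VV (x + 2 * h * (2 * k + 1)))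
      + (VV (x + 2 * h * (2 * k + 1)) + VV x) := by
      rw [show x + 2 * h * (2 * ((k + 1 : ℕ) : ℤ) + 1) =
        x + 2 * h * (2 * k + 1) + 2 * h + 2 * h by push_cast; ring]
      ring
    rw [this]
    exact dvd_add (dvd_sub h2 h1) ih

lemma VV_period (p : ℤ) (P : ℕ) (h0 : (vp P).1 % p = 2 % p) (h1 : (vp P).2 % p = 3 % p) (n : ℕ) :
    VV n ≡ VV (n % P : ℕ) [ZMOD p] := by
  have key : ∀ n : ℕ, VV (n + P : ℕ) ≡ VV n [ZMOD p] ∧ VV (n + P + 1 : ℕ) ≡ VV (n + 1 : ℕ) [ZMOD p] := by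
    intro n
    induction n with
    | zero =>
      rw [vp_eq] at h0 h1
      constructor
      · simpa [VV_zero, Int.ModEq] using h0
      · simpa [VV_one, Int.ModEq] using h1
    | succ n ih =>
      refine ⟨?_, ?_⟩
      · rw [show n + 1 + P = n + P + 1 by ring]; exact ih.2
      · have a1 := VV_add_two (n + P : ℕ)
        have a2 := VV_add_two n
        rw [show (((n + 1 + P + 1 : ℕ)) : ℤ) = ((n + P : ℕ) : ℤ) + 2 by push_cast; ring, a1,
          show (((n + 1 + 1 : ℕ)) : ℤ) = (n : ℤ) + 2 by push_cast; ring, a2]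
        refine Int.ModEq.sub (Int.ModEq.mul_left 3 ?_) ih.1
        simpa using ih.2
  have key2 : ∀ k m : ℕ, VV (m + P * k : ℕ) ≡ VV m [ZMOD p] := by
    intro k m
    induction k with
    | zero => simp
    | succ k ih =>
      rw [show m + P * (k + 1) = (m + P * k) + P by ring]
      exact (key _).1.trans ih
  have := key2 (n / P) (n % P)
  rwa [Nat.mod_add_div] at this

/-- all solutions of `V^2 = 5 W^2 + 4`. -/
lemma pell_param (W : ℕ) : ∀ V : ℤ, 0 ≤ V → V ^ 2 = 5 * (W : ℤ) ^ 2 + 4 →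
    ∃ i : ℕ, V = VV i ∧ 2 * VV (i + 1) = 3 * V + 5 * W := by
  induction W using Nat.strong_induction_on with
  | _ W ih =>
    intro V hV h
    rcases Nat.eq_zero_or_pos W with rfl | hW
    · have : V = 2 := by
        have : V ^ 2 = 2 ^ 2 := by rw [h]; norm_num
        exact (pow_left_inj₀ hV (by norm_num) (by norm_num)).1 this
      exact ⟨0, by simp [VV_zero, VV_one, this]⟩
    · have hWz : (1 : ℤ) ≤ W := by exact_mod_cast hW
      have hVW : (W : ℤ) < V := by nlinarith
      have hV3 : V ≤ 3 * W := by nlinarith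
      have hpos : 5 * (W : ℤ) ≤ 3 * V := by nlinarith
      have hpar : (V - W) % 2 = 0 := by
        have h2 : V % 2 = 0 ∨ V % 2 = 1 := by omega
        have h3 : (W : ℤ) % 2 = 0 ∨ (W : ℤ) % 2 = 1 := by omega
        have h4 : (V ^ 2 - 5 * (W : ℤ) ^ 2) % 2 = 0 := by rw [h]; ring_nf; norm_num
        rcases h2 with h2 | h2 <;> rcases h3 with h3 | h3 <;>
          first
          | omega
          | (exfalso; simp [pow_two, Int.sub_emod, Int.mul_emod, h2, h3] at h4)
      obtain ⟨W', hW'⟩ : ∃ W' : ℕ, (3 * (W : ℤ) - V) = 2 * W' :=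
        ⟨((3 * (W : ℤ) - V) / 2).toNat, by omega⟩
      obtain ⟨V', hV'⟩ : ∃ V' : ℤ, 3 * V - 5 * W = 2 * V' := ⟨(3 * V - 5 * W) / 2, by omega⟩
      obtain ⟨i, h1, h2⟩ := ih W' (by omega) V' (by omega) (by
        have e1 : (2 * V') ^ 2 = 5 * (2 * (W' : ℤ)) ^ 2 + 16 := by
          rw [← hW', ← hV']; linear_combination 4 * h
        linarith)
      have h3 := VV_add_two i
      refine ⟨i + 1, ?_, ?_⟩
      · push_cast; omega
      · push_cast
        rw [show (i : ℤ) + 1 + 1 = i + 2 by ring, h3]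
        omega

def tstX (p : ℕ) (X : ℤ) : Bool := (X ^ ((p + 1) / 2) - X) % p == 0

def tst (p : ℕ) (v : ℤ) : Bool :=
  tstX p ((5 * (4 * v + 8)) % p) && tstX p ((5 * (28 * v - 64)) % p) && tstX p ((28 * v - 80) % p)
    && tstX p ((7 * (4 * v - 12) ^ 2 + 100) % p)

lemma tstX_sq (p : ℕ) (hp : p.Prime) (ho : p % 2 = 1) (X Y y : ℤ) (h : X ≡ Y [ZMOD p])
    (hy : Y = y ^ 2) : tstX p (X % p) = true := by
  haveI : Fact p.Prime := ⟨hp⟩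
  have h1 : ((X % p : ℤ) : ZMod p) = (y : ZMod p) ^ 2 := by
    have := (ZMod.intCast_eq_intCast_iff (X % p) Y p).2 ((Int.mod_modEq _ _).trans h)
    rw [this, hy]; push_cast; rfl
  unfold tstX
  rw [beq_iff_eq]
  apply Int.emod_eq_zero_of_dvd
  rw [← ZMod.intCast_zmod_eq_zero_iff_dvd]
  rw [Int.cast_sub, Int.cast_pow, h1, ← pow_mul, show 2 * ((p + 1) / 2) = p + 1 by omega, pow_succ,
    ZMod.pow_card]
  ring

lemma tst_ok (p P : ℕ) (hp : p.Prime) (ho : p % 2 = 1) (h0 : (vp P).1 % p = 2 % p)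
    (h1 : (vp P).2 % p = 3 % p) (i : ℕ) (a x z w v : ℤ) (hP : P ∣ 280)
    (hV : 4 * VV i = 5 * a + 12) (hx : a + 4 = x ^ 2) (hz : 7 * a + 4 = z ^ 2)
    (hw : 35 * a + 4 = w ^ 2) (hv : 7 * a ^ 2 + 4 = v ^ 2) :
    tst p (vp (i % 280 % P)).1 = true := by
  have hm := (VV_period p P h0 h1 i).symm
  rw [VV_nat (i % P)] at hm
  rw [Nat.mod_mod_of_dvd _ hP]
  unfold tst
  simp only [Bool.and_eq_true]
  refine ⟨⟨⟨?_, ?_⟩, ?_⟩, ?_⟩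
  · exact tstX_sq p hp ho _ (5 * (4 * VV i + 8)) (5 * x) (by gcongr) (by rw [hV]; linear_combination 25 * hx)
  · exact tstX_sq p hp ho _ (5 * (28 * VV i - 64)) (5 * z) (by gcongr) (by linear_combination 25 * hz + 35 * hV)
  · exact tstX_sq p hp ho _ ((28 * VV i - 80)) (w) (by gcongr) (by linear_combination hw + 7 * hV)
  · exact tstX_sq p hp ho _ (7 * (4 * VV i - 12) ^ 2 + 100) (5 * v) (by gcongr)
      (by rw [hV]; linear_combination 25 * hv)

def sieveB (r : ℕ) : Bool :=
  (r % 2 == 0) || !(tst 11 (vp (r % 5)).1) || !(tst 13 (vp (r % 14)).1) || !(tst 71 (vp (r % 35)).1)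
    || !(tst 281 (vp (r % 28)).1) || !(tst 2161 (vp (r % 40)).1)
    || r == 1 || r == 5 || r == 275 || r == 279

lemma sieveB_all : ∀ r < 280, sieveB r = true := by decide +kernel

lemma sieve (i : ℕ) (a x z w v : ℤ)
    (hV : 4 * VV i = 5 * a + 12) (hx : a + 4 = x ^ 2) (hz : 7 * a + 4 = z ^ 2)
    (hw : 35 * a + 4 = w ^ 2) (hv : 7 * a ^ 2 + 4 = v ^ 2) :
    i % 280 = 1 ∨ i % 280 = 5 ∨ i % 280 = 275 ∨ i % 280 = 279 := by
  have h := sieveB_all (i % 280) (Nat.mod_lt _ (by norm_num))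
  have h5 : i % 280 % 2 = 1 := by
    have := VV_period 5 2 (by decide) (by decide) i
    by_contra hc
    have h0 : i % 2 = 0 := by omega
    rw [h0] at this
    simp [VV_zero, Int.ModEq] at this
    omega
  have t1 := tst_ok 11 5 (by norm_num) (by norm_num) (by decide +kernel) (by decide +kernel) i a x z w v (by norm_num) hV hx hz hw hv
  have t2 := tst_ok 13 14 (by norm_num) (by norm_num) (by decide +kernel) (by decide +kernel) i a x z w v (by norm_num) hV hx hz hw hv
  have t3 := tst_ok 71 35 (by norm_num) (by norm_num) (by decide +kernel) (by decide +kernel) i a x z w v (by norm_num) hV hx hz hw hv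
  have t4 := tst_ok 281 28 (by norm_num) (by norm_num) (by decide +kernel) (by decide +kernel) i a x z w v (by norm_num) hV hx hz hw hv
  have t5 := tst_ok 2161 40 (by norm_num) (by norm_num) (by decide +kernel) (by decide +kernel) i a x z w v (by norm_num) hV hx hz hw hv
  unfold sieveB at h
  rw [t1, t2, t3, t4, t5, h5] at h
  simp only [Bool.or_eq_true, beq_iff_eq] at h
  simpa [or_assoc] using h

lemma dbl_mod (q : ℤ) (h : ℤ) (s : ℤ) (hs : VV h % q = s) : VV (2 * h) % q = (s * s - 2) % q := by
  rw [VV_dbl, ← hs, pow_two, Int.sub_emod, Int.mul_emod]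
  simp [Int.sub_emod, Int.mul_emod]

lemma mod40 (c : ℕ) (hc : VV (4 * c) % 40 = 7) (t : ℕ) : VV (2 ^ t * (4 * c)) % 40 = 7 := by
  induction t with
  | zero => simpa using hc
  | succ t ih =>
    rw [pow_succ, mul_comm ((2 : ℤ) ^ t) 2, mul_assoc, dbl_mod 40 _ _ ih]; rfl

lemma mod37 (t : ℕ) : (VV (2 ^ t * 4) % 37, VV (2 ^ t * 20) % 37, VV (2 ^ t * 28) % 37) ∈
    ([(7, 31, 25), (8, 19, 24), (10, 34, 31), (19, 10, 7), (24, 7, 34), (25, 26, 19),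
      (26, 24, 10), (31, 8, 26), (34, 25, 8)] : List (ℤ × ℤ × ℤ)) := by
  induction t with
  | zero =>
    have h1 := VV_nat 4
    have h2 := VV_nat 20
    have h3 := VV_nat 28
    norm_num at h1 h2 h3
    rw [pow_zero, one_mul, one_mul, one_mul, h1, h2, h3]
    decide +kernel
  | succ t ih =>
    have e : ∀ x : ℤ, 2 ^ (t + 1) * x = 2 * (2 ^ t * x) := fun x => by ring
    rw [e, e, e, dbl_mod 37 _ _ rfl, dbl_mod 37 (2 ^ t * 20) _ rfl, dbl_mod 37 (2 ^ t * 28) _ rfl]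
    generalize VV (2 ^ t * 4) % 37 = A at *
    generalize VV (2 ^ t * 20) % 37 = B at *
    generalize VV (2 ^ t * 28) % 37 = C at *
    simp only [List.mem_cons, Prod.mk.injEq, List.not_mem_nil, or_false] at ih
    rcases ih with ⟨rfl, rfl, rfl⟩ | ⟨rfl, rfl, rfl⟩ | ⟨rfl, rfl, rfl⟩ | ⟨rfl, rfl, rfl⟩ |
      ⟨rfl, rfl, rfl⟩ | ⟨rfl, rfl, rfl⟩ | ⟨rfl, rfl, rfl⟩ | ⟨rfl, rfl, rfl⟩ | ⟨rfl, rfl, rfl⟩ <;>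
      decide

lemma mod881 (t : ℕ) : (VV (2 ^ t * 4) % 881, VV (2 ^ t * 20) % 881) ∈
    ([(47, 473), (276, 679), (408, 276), (445, 834), (679, 445), (834, 408)] : List (ℤ × ℤ)) := by
  induction t with
  | zero =>
    have h1 := VV_nat 4
    have h2 := VV_nat 20
    norm_num at h1 h2
    rw [pow_zero, one_mul, one_mul, h1, h2]
    decide +kernel
  | succ t ih =>
    have e : ∀ x : ℤ, 2 ^ (t + 1) * x = 2 * (2 ^ t * x) := fun x => by ring
    rw [e, e, dbl_mod 881 _ _ rfl, dbl_mod 881 (2 ^ t * 20) _ rfl]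
    generalize VV (2 ^ t * 4) % 881 = A at *
    generalize VV (2 ^ t * 20) % 881 = B at *
    simp only [List.mem_cons, Prod.mk.injEq, List.not_mem_nil, or_false] at ih
    rcases ih with ⟨rfl, rfl⟩ | ⟨rfl, rfl⟩ | ⟨rfl, rfl⟩ | ⟨rfl, rfl⟩ |
      ⟨rfl, rfl⟩ | ⟨rfl, rfl⟩ <;> decide

lemma VV_pos (n : ℕ) : 0 < VV n := by
  have : 0 < VV n ∧ VV n ≤ VV (n + 1) := by
    induction n with
    | zero => simp [VV_zero, VV_one]
    | succ n ih =>
      have := VV_add_two n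
      push_cast
      rw [show (n : ℤ) + 1 + 1 = n + 2 by ring]
      constructor <;> linarith
  exact this.1

lemma jac_facts (p : ℕ) (h40 : (p : ℤ) % 40 = 7) :
    J(-1 | p) = -1 ∧ J(5 | p) = -1 ∧ J(37 | p) = J((p : ℤ) % 37 | 37) ∧
    J(881 | p) = J((p : ℤ) % 881 | 881) := by
  have hodd : Odd p := by rw [Nat.odd_iff]; omega
  refine ⟨?_, ?_, ?_, ?_⟩
  · rw [jacobiSym.at_neg_one hodd, ZMod.χ₄_nat_three_mod_four (by omega)]
  · have := jacobiSym.quadratic_reciprocity_one_mod_four (a := 5) (b := p) (by norm_num) hodd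
    rw [show ((5 : ℤ)) = ((5 : ℕ) : ℤ) by rfl, this, jacobiSym.mod_left,
      show (p : ℤ) % ((5 : ℕ) : ℤ) = 2 by omega]
    norm_num
  · have := jacobiSym.quadratic_reciprocity_one_mod_four (a := 37) (b := p) (by norm_num) hodd
    rw [show ((37 : ℤ)) = ((37 : ℕ) : ℤ) by rfl, this, jacobiSym.mod_left]
  · have := jacobiSym.quadratic_reciprocity_one_mod_four (a := 881) (b := p) (by norm_num) hodd
    rw [show ((881 : ℤ)) = ((881 : ℕ) : ℤ) by rfl, this, jacobiSym.mod_left]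

lemma J_sq_nonneg (x : ℤ) (p : ℕ) : 0 ≤ J(x ^ 2 | p) := by
  rw [jacobiSym.pow_left]; positivity

lemma no37 (P : ℤ) (hP : 0 < P) (h40 : P % 40 = 7) (s z V : ℤ) (hs : P % 37 = s)
    (hJ : J(s | 37) = -1) (hV : P ∣ V + 3) (hz : 5 * z ^ 2 + 64 = 28 * V) : False := by
  lift P to ℕ using hP.le
  obtain ⟨h1, h2, h3, -⟩ := jac_facts P h40
  have hodd : Odd P := by rw [Nat.odd_iff]; omega
  rw [hs, hJ] at h3
  have e : J(5 * z ^ 2 | P) = J(4 * (-1 * 37) | P) := by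
    apply jacobiSym.mod_left'
    apply Int.ModEq.symm
    rw [Int.modEq_iff_dvd]
    obtain ⟨k, hk⟩ := hV
    exact ⟨28 * k, by linear_combination hz + 28 * hk⟩
  rw [jacobiSym.mul_left, jacobiSym.mul_left 4, jacobiSym.mul_left (-1), jacobiSym.at_four hodd, h1, h2, h3] at e
  have := J_sq_nonneg z P
  omega

lemma no881 (P : ℤ) (hP : 0 < P) (h40 : P % 40 = 7) (s w V : ℤ) (hs : P % 881 = s)
    (hJ : J(s | 881) = 1) (hV : P ∣ V + 123) (hz : w ^ 2 + 80 = 28 * V) : False := by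
  lift P to ℕ using hP.le
  obtain ⟨h1, h2, -, h3⟩ := jac_facts P h40
  have hodd : Odd P := by rw [Nat.odd_iff]; omega
  rw [hs, hJ] at h3
  have e : J(w ^ 2 | P) = J(4 * (-1 * 881) | P) := by
    apply jacobiSym.mod_left'
    apply Int.ModEq.symm
    rw [Int.modEq_iff_dvd]
    obtain ⟨k, hk⟩ := hV
    exact ⟨28 * k, by linear_combination hz + 28 * hk⟩
  rw [jacobiSym.mul_left 4, jacobiSym.mul_left (-1), jacobiSym.at_four hodd, h1, h3] at e
  have := J_sq_nonneg w P
  omega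

lemma pos' (t c : ℕ) : 0 < VV (2 ^ t * (4 * c)) := by
  have := VV_pos (2 ^ t * (4 * c)); push_cast at this; exact this

lemma b40 : VV (4 * (1 : ℕ)) % 40 = 7 ∧ VV (4 * (5 : ℕ)) % 40 = 7 ∧ VV (4 * (7 : ℕ)) % 40 = 7 := by
  have h1 := VV_nat 4
  have h2 := VV_nat 20
  have h3 := VV_nat 28
  norm_num at h1 h2 h3 ⊢
  rw [h1, h2, h3]
  decide +kernel

lemma case37 (r z i : ℤ) (hr : VV r = 3) (n : ℕ) (hn : n ≠ 0) (hi : i = r + 280 * n)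
    (hz : 5 * z ^ 2 + 64 = 28 * VV i) : False := by
  obtain ⟨t, m, ⟨k, rfl⟩, rfl⟩ := Nat.exists_eq_two_pow_mul_odd hn
  push_cast at hi
  have D : ∀ c K : ℕ, c * (2 * K + 1) = 35 * (2 * k + 1) → VV (2 ^ t * (4 * c)) ∣ VV i + 3 := by
    intro c K h
    have := VV_odd_shift r (2 ^ t * (4 * c)) K
    rw [hr] at this
    convert this using 3
    have h' : (c : ℤ) * (2 * K + 1) = 35 * (2 * k + 1) := by exact_mod_cast h
    rw [hi]
    linear_combination (-8 * 2 ^ t : ℤ) * h'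
  have D1 := D 1 (35 * k + 17) (by ring)
  have D5 := D 5 (7 * k + 3) (by ring)
  have D7 := D 7 (5 * k + 2) (by ring)
  have N1 := fun s hs hJ => no37 _ (pos' t 1) (mod40 1 b40.1 t) s z _ hs hJ D1 hz
  have N5 := fun s hs hJ => no37 _ (pos' t 5) (mod40 5 b40.2.1 t) s z _ hs hJ D5 hz
  have N7 := fun s hs hJ => no37 _ (pos' t 7) (mod40 7 b40.2.2 t) s z _ hs hJ D7 hz
  have M := mod37 t
  norm_num at N1 N5 N7
  simp only [List.mem_cons, Prod.mk.injEq, List.not_mem_nil, or_false] at M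
  rcases M with ⟨h1, h2, h3⟩ | ⟨h1, h2, h3⟩ | ⟨h1, h2, h3⟩ | ⟨h1, h2, h3⟩ |
      ⟨h1, h2, h3⟩ | ⟨h1, h2, h3⟩ | ⟨h1, h2, h3⟩ | ⟨h1, h2, h3⟩ | ⟨h1, h2, h3⟩ <;>
    rw [h1] at N1 <;> rw [h2] at N5 <;> rw [h3] at N7 <;>
    first
    | (refine N1 ?_; norm_num; done)
    | (refine N5 ?_; norm_num; done)
    | (refine N7 ?_; norm_num; done)

lemma case881 (r w i : ℤ) (hr : VV r = 123) (n : ℕ) (hn : n ≠ 0) (hi : i = r + 280 * n)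
    (hz : w ^ 2 + 80 = 28 * VV i) : False := by
  obtain ⟨t, m, ⟨k, rfl⟩, rfl⟩ := Nat.exists_eq_two_pow_mul_odd hn
  push_cast at hi
  have D : ∀ c K : ℕ, c * (2 * K + 1) = 35 * (2 * k + 1) → VV (2 ^ t * (4 * c)) ∣ VV i + 123 := by
    intro c K h
    have := VV_odd_shift r (2 ^ t * (4 * c)) K
    rw [hr] at this
    convert this using 3
    have h' : (c : ℤ) * (2 * K + 1) = 35 * (2 * k + 1) := by exact_mod_cast h
    rw [hi]
    linear_combination (-8 * 2 ^ t : ℤ) * h'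
  have D1 := D 1 (35 * k + 17) (by ring)
  have D5 := D 5 (7 * k + 3) (by ring)
  have N1 := fun s hs hJ => no881 _ (pos' t 1) (mod40 1 b40.1 t) s w _ hs hJ D1 hz
  have N5 := fun s hs hJ => no881 _ (pos' t 5) (mod40 5 b40.2.1 t) s w _ hs hJ D5 hz
  have M := mod881 t
  norm_num at N1 N5
  simp only [List.mem_cons, Prod.mk.injEq, List.not_mem_nil, or_false] at M
  rcases M with ⟨h1, h2⟩ | ⟨h1, h2⟩ | ⟨h1, h2⟩ | ⟨h1, h2⟩ | ⟨h1, h2⟩ | ⟨h1, h2⟩ <;>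
    rw [h1] at N1 <;> rw [h2] at N5 <;>
    first
    | (refine N1 ?_; norm_num; done)
    | (refine N5 ?_; norm_num; done)

lemma VV_five : VV 5 = 123 := by
  have := VV_nat 5
  norm_num at this
  rw [this]; rfl

/-- For a positive integer `a`, `{1, 5, a, 7a}` is a `D(4)`-quadruple iff `a = 96`. -/
theorem one_five_a_sevena_quadruple_iff (a : ℤ) (ha : 0 < a) :
    IsD4Quadruple 1 5 a (7 * a) ↔ a = 96 := by
  constructor
  · rintro ⟨-, -, -, -, -, -, -, -, -, -, -, ⟨x, hx⟩, ⟨z, hz⟩, ⟨y, hy⟩, ⟨w, hw⟩, ⟨v, hv⟩⟩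
    have hx' : a + 4 = x ^ 2 := by linarith
    have hy' : 5 * a + 4 = y ^ 2 := by linarith
    have hz' : 7 * a + 4 = z ^ 2 := by linarith
    have hw' : 35 * a + 4 = w ^ 2 := by linarith
    have hv' : 7 * a ^ 2 + 4 = v ^ 2 := by linarith
    have hmod : ∀ x : ℤ, x ^ 2 % 16 = 0 ∨ x ^ 2 % 16 = 1 ∨ x ^ 2 % 16 = 4 ∨ x ^ 2 % 16 = 9 := by
      intro x
      have : x % 16 = 0 ∨ x % 16 = 1 ∨ x % 16 = 2 ∨ x % 16 = 3 ∨ x % 16 = 4 ∨ x % 16 = 5 ∨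
        x % 16 = 6 ∨ x % 16 = 7 ∨ x % 16 = 8 ∨ x % 16 = 9 ∨ x % 16 = 10 ∨ x % 16 = 11 ∨
        x % 16 = 12 ∨ x % 16 = 13 ∨ x % 16 = 14 ∨ x % 16 = 15 := by omega
      rcases this with h | h | h | h | h | h | h | h | h | h | h | h | h | h | h | h <;>
        simp [pow_two, Int.mul_emod, h]
    have a4 : a % 4 = 0 := by
      have := hmod x; have := hmod y
      omega
    have x2 : x % 2 = 0 := by
      rcases Int.emod_two_eq_zero_or_one x with h | h
      · exact h
      · have : x ^ 2 % 2 = 1 := by simp [pow_two, Int.mul_emod, h]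
        omega
    have y2 : y % 2 = 0 := by
      rcases Int.emod_two_eq_zero_or_one y with h | h
      · exact h
      · have : y ^ 2 % 2 = 1 := by simp [pow_two, Int.mul_emod, h]
        omega
    obtain ⟨b, rfl⟩ : ∃ b, a = 4 * b := ⟨a / 4, by omega⟩
    obtain ⟨x1, rfl⟩ : ∃ b, x = 2 * b := ⟨x / 2, by omega⟩
    obtain ⟨y1, rfl⟩ : ∃ b, y = 2 * b := ⟨y / 2, by omega⟩
    obtain ⟨i, hi, -⟩ := pell_param (x1 * y1).natAbs (5 * b + 3) (by omega) (by
      rw [Int.natCast_natAbs, sq_abs]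
      have e1 : b + 1 = x1 ^ 2 := by linarith
      have e2 : 5 * b + 1 = y1 ^ 2 := by linarith
      rw [mul_pow, ← e1, ← e2]; ring)
    have hV : 4 * VV i = 5 * (4 * b) + 12 := by rw [← hi]; ring
    have hz2 : 5 * z ^ 2 + 64 = 28 * VV i := by linarith
    have hw2 : w ^ 2 + 80 = 28 * VV i := by linarith
    rcases sieve i _ _ z w v hV hx' hz' hw' hv' with h | h | h | h
    · exfalso
      by_cases h0 : i / 280 = 0
      · have : i = 1 := by omega
        subst this
        norm_num [VV_one] at hV
        omega
      · exact case37 1 z i VV_one (i / 280) h0 (by omega) hz2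
    · by_cases h0 : i / 280 = 0
      · have : i = 5 := by omega
        subst this
        norm_num [VV_five] at hV
        omega
      · exact (case881 5 w i VV_five (i / 280) h0 (by omega) hw2).elim
    · exact (case881 (-5) w i (by rw [VV_neg, VV_five]) (i / 280 + 1) (by omega) (by omega) hw2).elim
    · exact (case37 (-1) z i (by rw [VV_neg, VV_one]) (i / 280 + 1) (by omega) (by omega) hz2).elim
  · rintro rfl
    refine ⟨by norm_num, by norm_num, by norm_num, by norm_num, by norm_num, by norm_num,
      by norm_num, by norm_num, by norm_num, by norm_num, ⟨3, by norm_num⟩, ⟨10, by norm_num⟩,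
      ⟨26, by norm_num⟩, ⟨22, by norm_num⟩, ⟨58, by norm_num⟩, ⟨254, by norm_num⟩⟩
end

section
/- For a positive integer a, the set {1, 5, a, 8a} is a D(4)-quadruple if and only if a = 12. -/
/-- `V n` is the Lucas number of index `2n`. -/
def V : ℕ → ℤ
  | 0 => 2
  | 1 => 3
  | (n+2) => 3 * V (n+1) - V n

def ff : ℕ → ℤ
  | 0 => 1
  | 1 => 2
  | (n+2) => 3 * ff (n+1) - ff n

theorem V_rec (n : ℕ) : V (n+2) = 3 * V (n+1) - V n := by rw [V]

theorem ff_rec (n : ℕ) : ff (n+2) = 3 * ff (n+1) - ff n := by rw [ff]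

theorem V_shift (K : ℕ) : ∀ n, V (n + 2*K) + V n = V K * V (n+K) ∧
    V (n + 1 + 2*K) + V (n+1) = V K * V (n+1+K) := by
  induction K using Nat.twoStepInduction with
  | zero => intro n; simp [V]; constructor <;> ring
  | one =>
    intro n
    have h1 := V_rec n
    have h2 := V_rec (n+1)
    simp only [V]
    constructor
    · show V (n+2) + _ = _
      linarith
    · show V (n+1+2) + _ = _
      linarith
  | more K ih1 ih2 =>
    have key : ∀ n, V (n + 2*(K+2)) + V n = V (K+2) * V (n+(K+2)) := by
      intro n
      have a1 := (ih2 (n+1)).1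
      have a2 := (ih1 (n+2)).1
      have a3 := (ih2 n).1
      have e1 := V_rec K
      have r1 := V_rec n
      have r3 := V_rec (n + 2*(K+1))
      have e2 : n + 1 + 2 * (K+1) = n + 2*(K+1) + 1 := by ring
      have e3 : n + 2 + 2 * K = n + 2*(K+1) := by ring
      have e4 : n + 1 + (K+1) = n + (K+2) := by ring
      have e5 : n + 2 + K = n + (K+2) := by ring
      have e6 : n + 2 * (K+2) = n + 2*(K+1) + 2 := by ring
      rw [e2, e4] at a1
      rw [e3, e5] at a2
      rw [e6, r3, e1]
      linear_combination 3 * a1 - a2 + r1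
    intro n
    exact ⟨key n, key (n+1)⟩

theorem V_add (n K : ℕ) : V (n + 2*K) + V n = V K * V (n+K) := (V_shift K n).1

theorem V_dbl (K : ℕ) : V (2*K) = V K ^ 2 - 2 := by
  have h := V_add 0 K
  simp only [zero_add] at h
  have : V 0 = 2 := rfl
  rw [this] at h
  linear_combination h

theorem V_mod (K n g : ℕ) : V K ∣ V (n + 2*K*(2*g)) - V n := by
  induction g with
  | zero => simp
  | succ g ih =>
    have h1 := V_add (n + 2*K*(2*g)) K
    have h2 := V_add (n + 2*K*(2*g) + 2*K) K
    have e : n + 2*K*(2*(g+1)) = n + 2*K*(2*g) + 2*K + 2*K := by ring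
    rw [e]
    obtain ⟨c, hc⟩ := ih
    exact ⟨c + V (n + 2*K*(2*g) + 2*K + K) - V (n + 2*K*(2*g) + K), by
      linear_combination h2 - h1 + hc⟩

theorem V_plus (K r g : ℕ) : V K ∣ V (r + 2*K*(2*g+1)) + V r := by
  have h1 := V_mod K (r + 2*K) g
  have h2 := V_add r K
  have e : r + 2*K*(2*g+1) = r + 2*K + 2*K*(2*g) := by ring
  rw [e]
  obtain ⟨c, hc⟩ := h1
  exact ⟨c + V (r+K), by linear_combination h2 + hc⟩

theorem V_minus (K r g n : ℕ) (hr : r ≤ K) (hn : n + r = 2*K*(2*g+1)) :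
    V K ∣ V n + V r := by
  obtain ⟨s, rfl⟩ := Nat.exists_eq_add_of_le hr
  have h1 := V_mod (r+s) (r + 2*s) g
  have h2 := V_add r s
  have e : n = r + 2*s + 2*(r+s)*(2*g) := by
    have : 2*(r+s)*(2*g+1) = 2*(r+s)*(2*g) + 2 * r + 2 * s := by ring
    omega
  rw [e]
  obtain ⟨c, hc⟩ := h1
  exact ⟨c + V s, by linear_combination h2 + hc⟩

/-- orbit facts -/
theorem V7 (i : ℕ) : V (7 * 2^(3+i)) % 167 = 166 ∧ V (7 * 2^(3+i)) % 4 = 3 ∧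
    0 < V (7 * 2^(3+i)) := by
  induction i with
  | zero => decide +kernel
  | succ i ih =>
    have e : 7 * 2^(3+(i+1)) = 2 * (7 * 2^(3+i)) := by ring
    rw [e, V_dbl]
    obtain ⟨h1, h2, h3⟩ := ih
    refine ⟨?_, ?_, by nlinarith [show 2 ≤ V (7 * 2^(3+i)) by omega]⟩
    · rw [Int.sub_emod, pow_two, Int.mul_emod, h1]; rfl
    · rw [Int.sub_emod, pow_two, Int.mul_emod, h2]; rfl

theorem V1 (i : ℕ) : ((V (2^(3+i)) % 215, V (7 * 2^(3+i)) % 215) ∈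
      ([(57, 52), (22, 122), (52, 47), (122, 57),
        (47, 22)] : List (ℤ × ℤ))) ∧ V (2^(3+i)) % 4 = 3 ∧
    0 < V (2^(3+i)) := by
  induction i with
  | zero => decide +kernel
  | succ i ih =>
    have e : 2^(3+(i+1)) = 2 * (2^(3+i)) := by ring
    have e' : 7 * (2 * 2^(3+i)) = 2 * (7 * 2^(3+i)) := by ring
    rw [e, e', V_dbl, V_dbl]
    obtain ⟨h1, h2, h3⟩ := ih
    refine ⟨?_, ?_, by nlinarith [show 2 ≤ V (2^(3+i)) by omega]⟩
    · have s : ∀ x : ℤ, (x^2 - 2) % 215 = ((x % 215)*(x%215) - 2) % 215 := by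
        intro x
        rw [Int.sub_emod, pow_two, Int.mul_emod, ← Int.sub_emod]
      rw [s, s]
      generalize V (2^(3+i)) % 215 = x at *
      generalize V (7 * 2^(3+i)) % 215 = y at *
      have H : ∀ z ∈ ([(57, 52), (22, 122), (52, 47),
        (122, 57), (47, 22)] : List (ℤ × ℤ)),
        ((z.1*z.1-2) % 215, (z.2*z.2-2) % 215) ∈
        ([(57, 52), (22, 122), (52, 47), (122, 57),
        (47, 22)] : List (ℤ × ℤ)) := by decide +kernel
      exact H _ h1
    · rw [Int.sub_emod, pow_two, Int.mul_emod, h2]; rfl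

theorem jac_contra (D : ℕ) (hD : D % 4 = 3) (M w : ℤ) (hM : M % 4 = 3) (hp : 0 < M)
    (h : M ∣ w^2 + D) (hj : jacobiSym M D = -1) : False := by
  obtain ⟨m, rfl⟩ := Int.eq_ofNat_of_zero_le hp.le
  have hm : m % 4 = 3 := by omega
  have h1 := jacobiSym.quadratic_reciprocity_three_mod_four hm hD
  have h2 : jacobiSym (-(D:ℤ)) m = -1 := by
    rw [jacobiSym.neg _ (Nat.odd_iff.2 (by omega)), ZMod.χ₄_nat_three_mod_four hm]
    linarith
  have h3 : jacobiSym (-(D:ℤ)) m = jacobiSym (w^2) m := by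
    apply jacobiSym.mod_left'
    apply Int.ModEq.eq
    rw [Int.modEq_iff_dvd]
    simpa using h
  rw [h3, jacobiSym.pow_left] at h2
  nlinarith [sq_nonneg (jacobiSym w m)]

/-- sieve -/
def chk (p r : ℕ) : Bool :=
  ((8 * V r - 23)^((p+1)/2) - (8 * V r - 23)) % p == 0 &&
  ((40 * V r - 95)^((p+1)/2) - (40 * V r - 95)) % p == 0

theorem sieve0 : ∀ r < 336, (r % 2 == 1 && chk 13 (r%14) && chk 23 (r%24) &&
    chk 47 (r%16) && chk 83 (r%84) && chk 167 (r%168) && chk 421 (r%42)) = true →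
    r % 112 = 1 ∨ r%112 = 3 ∨ r%112 = 109 ∨ r%112 = 111 := by decide +kernel

theorem sieve_s9 (r : ℕ) (hr : r < 336) (h : r % 2 = 1) (h1 : chk 13 (r%14) = true)
    (h2 : chk 23 (r%24) = true) (h3 : chk 47 (r%16) = true) (h4 : chk 83 (r%84) = true)
    (h5 : chk 167 (r%168) = true) (h6 : chk 421 (r%42) = true) :
    r % 112 = 1 ∨ r%112 = 3 ∨ r%112 = 109 ∨ r%112 = 111 := by
  apply sieve0 r hr
  rw [h1, h2, h3, h4, h5, h6, h]
  rfl

theorem V_per (p T : ℕ) (h0 : (V T - 2) % p = 0) (h1 : (V (T+1) - 3) % p = 0) (n : ℕ) :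
    (p:ℤ) ∣ V n - V (n % T) := by
  have h : ∀ n, (p:ℤ) ∣ V (n+T) - V n ∧ (p:ℤ) ∣ V (n+1+T) - V (n+1) := by
    intro n
    induction n with
    | zero =>
      refine ⟨?_, ?_⟩
      · simpa [V] using Int.dvd_of_emod_eq_zero h0
      · have : 0 + 1 + T = T + 1 := by ring
        rw [this]
        simpa [V] using Int.dvd_of_emod_eq_zero h1
    | succ n ih =>
      refine ⟨ih.2, ?_⟩
      obtain ⟨⟨a, ha⟩, ⟨b, hb⟩⟩ := ih
      have e : n + 1 + 1 + T = (n + T) + 2 := by ring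
      have e2 : n + 1 + T = n + T + 1 := by ring
      rw [e, V_rec, V_rec]
      rw [e2] at hb
      exact ⟨3 * b - a, by linear_combination 3 * hb - ha⟩
  have h' : ∀ q r, (p:ℤ) ∣ V (r + T * q) - V r := by
    intro q r
    induction q with
    | zero => simp
    | succ q ih =>
      have := dvd_add (h (r + T*q)).1 ih
      have e : r + T * (q+1) = r + T * q + T := by ring
      rw [e]
      simpa using this
  have := h' (n / T) (n % T)
  rwa [Nat.mod_add_div] at this

theorem pow_chk (p : ℕ) (hp : p.Prime) (hodd : p % 2 = 1) (c d w : ℤ) (h : w^2 = c)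
    (hd : (p:ℤ) ∣ c - d) : (d^((p+1)/2) - d) % p = 0 := by
  haveI := Fact.mk hp
  have h1 : ((d : ℤ) : ZMod p) = ((w:ℤ) : ZMod p)^2 := by
    rw [← Int.cast_pow, h]
    exact ((ZMod.intCast_eq_intCast_iff_dvd_sub d c p).2 hd)
  apply Int.emod_eq_zero_of_dvd
  rw [← ZMod.intCast_zmod_eq_zero_iff_dvd]
  push_cast
  rw [h1, ← pow_mul, show 2 * ((p+1)/2) = p + 1 by omega, pow_succ, ZMod.pow_card]
  ring

theorem do_chk (p T : ℕ) (hp : p.Prime) (hodd : p % 2 = 1) (h0 : (V T - 2) % p = 0)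
    (h1 : (V (T+1) - 3) % p = 0) (n : ℕ) (u w : ℤ) (hw : w^2 = 8 * V n - 23)
    (hu : u^2 = 40 * V n - 95) : chk p (n % 336 % T) = true ∨ ¬ (T ∣ 336) := by
  by_cases hT : T ∣ 336
  · left
    rw [Nat.mod_mod_of_dvd _ hT]
    have hv := V_per p T h0 h1 n
    simp only [chk, Bool.and_eq_true, beq_iff_eq]
    constructor
    · apply pow_chk p hp hodd _ _ w hw
      obtain ⟨k, hk⟩ := hv
      exact ⟨8*k, by linear_combination 8 * hk⟩
    · apply pow_chk p hp hodd _ _ u hu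
      obtain ⟨k, hk⟩ := hv
      exact ⟨40*k, by linear_combination 40 * hk⟩
  · exact Or.inr hT

theorem sieved (n : ℕ) (hn : n % 2 = 1) (u w : ℤ) (hw : w^2 = 8 * V n - 23)
    (hu : u^2 = 40 * V n - 95) :
    n % 112 = 1 ∨ n%112 = 3 ∨ n%112 = 109 ∨ n%112 = 111 := by
  have H := sieve_s9 (n % 336) (Nat.mod_lt _ (by norm_num)) (by omega)
    ((do_chk 13 14 (by norm_num) (by norm_num) (by decide +kernel) (by decide +kernel) n u w hw hu).resolve_right (by norm_num))
    ((do_chk 23 24 (by norm_num) (by norm_num) (by decide +kernel) (by decide +kernel) n u w hw hu).resolve_right (by norm_num))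
    ((do_chk 47 16 (by norm_num) (by norm_num) (by decide +kernel) (by decide +kernel) n u w hw hu).resolve_right (by norm_num))
    ((do_chk 83 84 (by norm_num) (by norm_num) (by decide +kernel) (by decide +kernel) n u w hw hu).resolve_right (by norm_num))
    ((do_chk 167 168 (by norm_num) (by norm_num) (by decide +kernel) (by decide +kernel) n u w hw hu).resolve_right (by norm_num))
    ((do_chk 421 42 (by norm_num) (by norm_num) (by decide +kernel) (by decide +kernel) n u w hw hu).resolve_right (by norm_num))
  omega

theorem no3 (i : ℕ) (X w : ℤ) (hw : w^2 = 8 * X - 23) (h : V (7*2^(3+i)) ∣ X + V 3) : False := by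
  obtain ⟨h1, h2, h3⟩ := V7 i
  have e : V 3 = 18 := by decide +kernel
  rw [e] at h
  refine jac_contra 167 (by norm_num) _ w h2 h3 ?_ ?_
  · obtain ⟨k, hk⟩ := h
    exact ⟨8*k, by push_cast; linear_combination hw + 8 * hk⟩
  · rw [jacobiSym.mod_left]
    push_cast
    rw [h1]; norm_num

theorem no1 (i : ℕ) (X u : ℤ) (hu : u^2 = 40 * X - 95) (h : V (7*2^(3+i)) ∣ X + V 1)
    (h' : V (2^(3+i)) ∣ X + V 1) : False := by
  obtain ⟨_, h2, h3⟩ := V7 i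
  obtain ⟨g1, g2, g3⟩ := V1 i
  have e : V 1 = 3 := rfl
  rw [e] at h h'
  have A : jacobiSym (V (2^(3+i)) % 215) 215 = -1 ∨ jacobiSym (V (7*2^(3+i)) % 215) 215 = -1 := by
    simp only [List.mem_cons, Prod.mk.injEq, List.not_mem_nil, or_false] at g1
    rcases g1 with ⟨a, b⟩ | ⟨a, b⟩ | ⟨a, b⟩ | ⟨a, b⟩ | ⟨a, b⟩ <;> rw [a, b] <;> norm_num
  rcases A with A | A
  · refine jac_contra 215 (by norm_num) _ u g2 g3 ?_ ?_
    · obtain ⟨k, hk⟩ := h'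
      exact ⟨40*k, by push_cast; linear_combination hu + 40 * hk⟩
    · rw [jacobiSym.mod_left]; exact_mod_cast A
  · refine jac_contra 215 (by norm_num) _ u h2 h3 ?_ ?_
    · obtain ⟨k, hk⟩ := h
      exact ⟨40*k, by push_cast; linear_combination hu + 40 * hk⟩
    · rw [jacobiSym.mod_left]; exact_mod_cast A

theorem small (n : ℕ) (hn : n % 2 = 1) (u w : ℤ) (hw : w^2 = 8 * V n - 23)
    (hu : u^2 = 40 * V n - 95) : n = 1 ∨ n = 3 := by
  by_contra hne
  push Not at hne
  have dec : ∀ q : ℕ, q ≠ 0 → ∃ i g, 112 * q = 2 * (7*2^(3+i)) * (2*g+1) ∧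
      112 * q = 2 * (2^(3+i)) * (2*(7*g+3)+1) ∧ 8 ≤ 2^(3+i) := by
    intro q hq
    obtain ⟨i, m, hm, rfl⟩ := Nat.exists_eq_two_pow_mul_odd hq
    obtain ⟨g, rfl⟩ := hm
    refine ⟨i, g, by ring, by ring, ?_⟩
    rw [pow_add]
    have := Nat.one_le_two_pow (n := i)
    omega
  rcases sieved n hn u w hw hu with h | h | h | h
  · obtain ⟨i, g, e1, e2, e3⟩ := dec (n / 112) (by omega)
    apply no1 i (V n) u hu
    · have := V_plus (7*2^(3+i)) 1 g
      rwa [← e1, show 1 + 112 * (n/112) = n by omega] at this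
    · have := V_plus (2^(3+i)) 1 (7*g+3)
      rwa [← e2, show 1 + 112 * (n/112) = n by omega] at this
  · obtain ⟨i, g, e1, e2, e3⟩ := dec (n / 112) (by omega)
    apply no3 i (V n) w hw
    have := V_plus (7*2^(3+i)) 3 g
    rwa [← e1, show 3 + 112 * (n/112) = n by omega] at this
  · obtain ⟨i, g, e1, e2, e3⟩ := dec (n / 112 + 1) (by omega)
    apply no3 i (V n) w hw
    exact V_minus (7*2^(3+i)) 3 g n (by omega) (by rw [← e1]; omega)
  · obtain ⟨i, g, e1, e2, e3⟩ := dec (n / 112 + 1) (by omega)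
    apply no1 i (V n) u hu
    · exact V_minus (7*2^(3+i)) 1 g n (by omega) (by rw [← e1]; omega)
    · exact V_minus (2^(3+i)) 1 (7*g+3) n (by omega) (by rw [← e2]; omega)

theorem ff_norm (k : ℕ) : ff k ^ 2 - 3 * ff k * ff (k+1) + ff (k+1)^2 = -1 := by
  induction k with
  | zero => rfl
  | succ k ih => rw [ff_rec]; linear_combination ih

theorem V_ff (k : ℕ) : V (2*k+1) = 5 * ff k ^ 2 - 2 ∧ V (2*k+2) = 5 * ff k * ff (k+1) - 3 := by
  induction k with
  | zero => decide +kernel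
  | succ k ih =>
    have n := ff_norm k
    have r1 : V (2*(k+1)+1) = 3 * V (2*k+2) - V (2*k+1) := V_rec (2*k+1)
    have r2 : V (2*(k+1)+2) = 3 * V (2*(k+1)+1) - V (2*k+2) := V_rec (2*k+2)
    have r3 := ff_rec k
    have A : V (2*(k+1)+1) = 5 * ff (k+1) ^ 2 - 2 := by
      rw [r1, ih.1, ih.2]; linear_combination -5 * n
    refine ⟨A, ?_⟩
    rw [r2, A, ih.2, r3]; ring

theorem descent : ∀ N : ℕ, ∀ p q : ℤ, p ≤ N → 0 < p → p < q → p^2 - 3*p*q + q^2 = -1 →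
    ∃ k, p = ff k ∧ q = ff (k+1) := by
  intro N
  induction N with
  | zero => intro p q h1 h2; exact absurd h1 (by push_cast; omega)
  | succ N ih =>
    intro p q h1 h2 h3 h4
    by_cases hp : p = 1
    · subst hp
      have : (q-1)*(q-2) = 0 := by linear_combination h4
      rcases mul_eq_zero.1 this with h | h
      · omega
      · exact ⟨0, rfl, by simp [ff]; omega⟩
    · have hm : (3*p - q) * q = p^2+1 := by linear_combination -h4
      have hpos : 0 < 3*p-q := by
        by_contra hc
        nlinarith
      have hlt : 3*p - q < p := by
        by_contra hc
        nlinarith [show 2 ≤ p by omega]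
      obtain ⟨k, hk1, hk2⟩ := ih (3*p-q) p (by push_cast at h1; omega) hpos hlt
        (by linear_combination h4)
      exact ⟨k+1, hk2, by rw [ff_rec]; linarith⟩

/-- For a positive integer `a`, `{1, 5, a, 8a}` is a `D(4)`-quadruple iff `a = 12`. -/
theorem one_five_a_eighta_quadruple_iff (a : ℤ) (ha : 0 < a) :
    IsD4Quadruple 1 5 a (8 * a) ↔ a = 12 := by
  constructor
  · rintro ⟨-, -, -, -, -, -, -, -, -, -, -, ⟨x, hx⟩, ⟨u, hu⟩, ⟨y, hy⟩, ⟨w, hw⟩, -⟩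
    wlog hx0 : 0 ≤ x generalizing x
    · exact this (-x) (by linarith) (by linarith)
    wlog hy0 : 0 ≤ y generalizing y
    · exact this (-y) (by linarith) (by linarith)
    -- halve everything
    have ev : ∀ z t : ℤ, 4 * t = z * z → ∃ z', z = 2 * z' ∧ t = z' * z' := by
      intro z t h
      have h2 : Even (z * z) := ⟨2 * t, by linarith⟩
      have : Even z := by
        rcases Int.even_mul.1 h2 with h | h <;> exact h
      obtain ⟨z', hz⟩ := this
      refine ⟨z', by linarith, ?_⟩
      subst hz; nlinarith
    obtain ⟨u, rfl, hu'⟩ := ev u (2*a+1) (by linarith)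
    obtain ⟨w, rfl, hw'⟩ := ev w (10*a+1) (by linarith)
    have hodd : u % 2 = 1 := by
      rcases Int.emod_two_eq_zero_or_one u with h | h
      · obtain ⟨t, rfl⟩ := Int.dvd_of_emod_eq_zero h
        exfalso
        have : 2 * a + 1 = 2 * (2 * (t*t)) := by linarith
        omega
      · exact h
    obtain ⟨t, rfl⟩ : ∃ t, u = 2*t+1 := ⟨u/2, by omega⟩
    obtain ⟨s, hs⟩ := Int.even_mul_succ_self t
    obtain rfl : a = 4 * s := by nlinarith
    obtain ⟨x, rfl, hx'⟩ := ev x (s+1) (by linarith)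
    obtain ⟨y, rfl, hy'⟩ := ev y (5*s+1) (by linarith)
    have hs0 : 0 < s := by linarith
    have hx1 : 0 < x := by nlinarith
    have hy1 : x < y := by nlinarith
    have hpar : (3*x+y) % 2 = 0 := by
      have h1 : (y*y - x*x) % 2 = 0 := by
        have : y*y - x*x = 2 * (2*s) := by linarith
        omega
      have h2 : Even (y*y - x*x) := Int.even_iff.2 h1
      have h3 : Even (3*x+y) := by
        simp only [Int.even_sub, Int.even_mul, Int.even_add] at h2 ⊢
        have : ¬ Even (3:ℤ) := by decide
        tauto
      exact Int.even_iff.1 h3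
    obtain ⟨q, hq⟩ := Int.dvd_of_emod_eq_zero hpar
    have hyq : y = 2*q - 3*x := by linarith
    obtain ⟨k, hk, -⟩ := descent x.toNat x q (by omega) hx1 (by omega)
      (by subst hyq; nlinarith)
    have hV : V (2*k+1) = 5 * s + 3 := by
      rw [(V_ff k).1, ← hk]; linarith
    have := small (2*k+1) (by omega) (5*(2*t+1)) w (by rw [hV]; linarith) (by rw [hV]; linarith)
    rcases this with h | h
    · rw [h] at hV
      have e : V 1 = 3 := rfl
      omega
    · rw [h] at hV
      have e : V 3 = 18 := by decide +kernel
      omega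
  · rintro rfl
    refine ⟨by norm_num, by norm_num, by norm_num, by norm_num, by norm_num, by norm_num, by norm_num, by norm_num, by norm_num, by norm_num, ⟨3, by norm_num⟩, ⟨4, by norm_num⟩, ⟨10, by norm_num⟩, ⟨8, by norm_num⟩, ⟨22, by norm_num⟩, ⟨34, by norm_num⟩⟩
end

section
/- Let k ∈ {7, 8, 10, 11, 12, 13} and let a be a positive integer with k·a² + 4 = r² a perfect square. Set b = ka, c = a + b − 2r and s = r − a (so that ac + 4 = s² and bc + 4 = (b − r)²), and assume a < c < b. Consider a solution of Type 1, i.e. (x₂, y₂) = (2, ±2) and (x₀, z₀) = (2, ±2). If P_l = Q_m for some integers l ≥ 1 and m ≥ 1, then 0 < Λ' < 2.6·α^{−2l}, where Λ' = m·log β − l·log α + log γ'. -/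
lemma aux_seq (a b r ε : ℝ) (ha : 1 ≤ a) (hab : a < b) (hr : 0 < r) (hr2 : r ^ 2 = a * b + 4)
    (hε : ε = 1 ∨ ε = -1) (X : ℕ → ℝ) (h0 : X 0 = 2) (h1 : X 1 = r + ε * a)
    (hrec : ∀ i, X (i + 2) = r * X (i + 1) - X i) (n : ℕ) (hn : 1 ≤ n) (α p : ℝ)
    (hα : α = (r + √(a * b)) / 2) (hp : p = (√b + ε * √a) / √b * α ^ n) :
    1 < α ∧ 0 < √b - √a ∧ X n = p + (1 - a / b) / p ∧ (√b - √a) / √b * α ^ n ≤ p ∧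
      √a * (√b - √a) ≤ p := by
  have hsm : √(a * b) = √a * √b := Real.sqrt_mul (by linarith) b
  have he2 : √a ^ 2 = a := Real.sq_sqrt (by linarith)
  have hf2 : √b ^ 2 = b := Real.sq_sqrt (by linarith)
  have hef : √a < √b := Real.sqrt_lt_sqrt (by linarith) hab
  have he1 : 1 ≤ √a := by rw [Real.one_le_sqrt]; exact ha
  rw [hsm] at hα
  generalize √a = e at *
  generalize √b = f at *
  have hf : 0 < f := by linarith
  have hef1 : 1 ≤ e * f := by nlinarith
  have hrf : e * f < r := by
    apply lt_of_pow_lt_pow_left₀ 2 hr.le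
    rw [mul_pow, he2, hf2, hr2]; linarith
  have hαef : e * f < α := by linarith
  have hα1 : 1 < α := by linarith
  have hinv : α * ((r - e * f) / 2) = 1 := by
    rw [hα]; linear_combination (1/4) * hr2 - (1/4) * f ^ 2 * he2 - (1/4) * a * hf2
  have hε2 : ε ^ 2 = 1 := by rcases hε with h | h <;> rw [h] <;> norm_num
  have hεe : -e ≤ ε * e := by rcases hε with h | h <;> rw [h] <;> linarith
  have key : ∀ n, X n = (f + ε * e) / f * α ^ n + (f - ε * e) / f * ((r - e * f) / 2) ^ n := by
    intro n
    induction n using Nat.twoStepInduction with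
    | zero => rw [h0]; field_simp; ring
    | one => 
      rw [h1, hα, ← he2]; field_simp; ring
    | more n i1 i2 =>
      rw [hrec, i1, i2]
      have e1 : α ^ 2 = r * α - 1 := by
        rw [← hinv, hα]; ring
      have e2 : ((r - e * f) / 2) ^ 2 = r * ((r - e * f) / 2) - 1 := by
        rw [← hinv, hα]; ring
      rw [pow_add _ n 2, pow_add _ n 2, e1, e2]; ring
  have hlow : (f - e) / f * α ^ n ≤ p := by
    rw [hp]
    have : 0 < α ^ n := by positivity
    gcongr
    linarith
  have hpos : 0 < (f - e) / f := div_pos (by linarith) hf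
  refine ⟨hα1, by linarith, ?_, hlow, ?_⟩
  · rw [key n, ← hp]
    congr 1
    have hu : f + ε * e ≠ 0 := by linarith
    have : (r - e * f) / 2 = α⁻¹ := eq_inv_of_mul_eq_one_right hinv
    rw [this, hp, ← he2, ← hf2, inv_pow]
    have : α ≠ 0 := by linarith
    field_simp
    linear_combination (-e^2) * hε2
  · refine le_trans ?_ hlow
    have : α ≤ α ^ n := le_self_pow₀ hα1.le (by omega)
    calc e * (f - e) = (f - e) / f * (e * f) := by field_simp
      _ ≤ _ := by gcongr; linarith

lemma aux_core (p q A C : ℝ) (hp : 0 < p) (hq : 0 < q) (hC : 0 < C) (hCA : C < A) (hpq : C < p * q)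
    (h : p + A / p = q + C / q) : p < q ∧ q / p - 1 < A / p ^ 2 := by
  constructor
  · by_contra! hle
    field_simp at h
    nlinarith [mul_nonneg (sub_nonneg.2 hle) (sub_nonneg.2 hpq.le), mul_pos (sub_pos.2 hCA) hq]
  · have h3 : 0 < C / q := by positivity
    have : q < p + A / p := by linarith
    have h2 : q / p < (p + A / p) / p := by gcongr
    have e : (p + A / p) / p = 1 + A / p ^ 2 := by field_simp
    linarith

lemma aux_int (k a r : ℤ)
    (hk : k ∈ ({7, 8, 10, 11, 12, 13} : Set ℤ)) (ha : 0 < a) (hr : 0 < r)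
    (hr2 : k * a ^ 2 + 4 = r ^ 2) : (a + 1) ^ 2 < a * (a + k * a - 2 * r) := by
  have hk7 : 7 ≤ k ∧ k ≤ 13 := by
    simp only [Set.mem_insert_iff, Set.mem_singleton_iff] at hk; omega
  have key : ∀ a : ℤ, 3 ≤ a → k * a ^ 2 + 4 = r ^ 2 → 2 * r ≤ k * a - 3 := by
    intro a h3 h
    have : 0 ≤ k * a - 3 := by nlinarith
    apply abs_le_of_sq_le_sq' _ this |>.2
    simp only [Set.mem_insert_iff, Set.mem_singleton_iff] at hk
    rcases hk with rfl | rfl | rfl | rfl | rfl | rfl <;> nlinarith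
  rcases lt_or_ge a 3 with h | h
  · have hr9 : r ≤ 9 := by nlinarith
    simp only [Set.mem_insert_iff, Set.mem_singleton_iff] at hk
    interval_cases a <;> interval_cases r <;> omega
  · nlinarith [key a h hr2]

set_option maxHeartbeats 1000000 in
/-- For `k ∈ {7,8,10,11,12,13}`, `b = ka`, `c = c₁⁻ = a + b − 2r`, `s = r − a`, with a
solution of Type 1 (`x₂ = 2`, `y₂ = ±2`, `x₀ = 2`, `z₀ = ±2`): if `P_l = Q_m` with
`l ≥ 1`, `m ≥ 1`, then `0 < Λ' < 2.6·α^{−2l}`, where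
`Λ' = m·log β − l·log α + log γ'`. -/
theorem linear_form_bound_c1_minus
    (k a r b c s : ℤ)
    (hk : k ∈ ({7, 8, 10, 11, 12, 13} : Set ℤ)) (ha : 0 < a) (hr : 0 < r)
    (hr2 : k * a ^ 2 + 4 = r ^ 2) (hb : b = k * a) (hc : c = a + b - 2 * r)
    (hs : s = r - a) (hac : a < c) (hcb : c < b)
    (x₂ y₂ x₀ z₀ : ℤ)
    (hx₂ : x₂ = 2) (hy₂ : y₂ = 2 ∨ y₂ = -2) (hx₀ : x₀ = 2) (hz₀ : z₀ = 2 ∨ z₀ = -2)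
    (P Q : ℕ → ℤ)
    (hP0 : P 0 = x₂) (hP1 : 2 * P 1 = r * x₂ + a * y₂)
    (hPrec : ∀ i : ℕ, P (i + 2) = r * P (i + 1) - P i)
    (hQ0 : Q 0 = x₀) (hQ1 : 2 * Q 1 = s * x₀ + a * z₀)
    (hQrec : ∀ i : ℕ, Q (i + 2) = s * Q (i + 1) - Q i)
    (l m : ℕ)
    (α β γ' Λ' : ℝ)
    (hα : α = ((r : ℝ) + Real.sqrt ((a : ℝ) * (b : ℝ))) / 2)
    (hβ : β = ((s : ℝ) + Real.sqrt ((a : ℝ) * (c : ℝ))) / 2)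
    (hγ' : γ' = (Real.sqrt (b : ℝ) * ((z₀ : ℝ) * Real.sqrt (a : ℝ) + (x₀ : ℝ) * Real.sqrt (c : ℝ))) /
                (Real.sqrt (c : ℝ) * ((y₂ : ℝ) * Real.sqrt (a : ℝ) + (x₂ : ℝ) * Real.sqrt (b : ℝ))))
    (hΛ' : Λ' = (m : ℝ) * Real.log β - (l : ℝ) * Real.log α + Real.log γ')
    (hl : 1 ≤ l) (hm : 1 ≤ m) (heq : P l = Q m) :
    0 < Λ' ∧ Λ' < 2.6 / α ^ (2 * l) := by
  have hint := aux_int k a r hk ha hr hr2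
  have hk7 : 7 ≤ k := by
    simp only [Set.mem_insert_iff, Set.mem_singleton_iff] at hk; omega
  have hkk : k ≤ 13 := by
    simp only [Set.mem_insert_iff, Set.mem_singleton_iff] at hk; omega
  rw [← hb, ← hc] at hint
  have hspos : 0 < s := by rw [hs]; nlinarith
  have hrR : ((r : ℝ)) ^ 2 = a * b + 4 := by
    have : r ^ 2 = a * b + 4 := by rw [← hr2, hb]; ring
    exact_mod_cast this
  have hsR : ((s : ℝ)) ^ 2 = a * c + 4 := by
    have : s ^ 2 = a * c + 4 := by rw [hs, hc, hb]; linear_combination -hr2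
    exact_mod_cast this
  have haR : (1 : ℝ) ≤ a := by exact_mod_cast ha
  have hacR : (a : ℝ) < c := by exact_mod_cast hac
  have hcbR : (c : ℝ) < b := by exact_mod_cast hcb
  have hrpos : (0 : ℝ) < r := by exact_mod_cast hr
  have hsposR : (0 : ℝ) < s := by exact_mod_cast hspos
  have hintR : ((a : ℝ) + 1) ^ 2 < a * c := by exact_mod_cast hint
  have hbR : (7 : ℝ) * a ≤ b := by
    have : 7 * a ≤ b := by rw [hb]; nlinarith
    exact_mod_cast this
  subst hx₂ hx₀
  obtain ⟨ε, hε, hyε⟩ : ∃ ε : ℝ, (ε = 1 ∨ ε = -1) ∧ (y₂ : ℝ) = 2 * ε := by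
    rcases hy₂ with h | h
    · exact ⟨1, Or.inl rfl, by rw [h]; norm_num⟩
    · exact ⟨-1, Or.inr rfl, by rw [h]; norm_num⟩
  obtain ⟨δ, hδ, hzδ⟩ : ∃ ε : ℝ, (ε = 1 ∨ ε = -1) ∧ (z₀ : ℝ) = 2 * ε := by
    rcases hz₀ with h | h
    · exact ⟨1, Or.inl rfl, by rw [h]; norm_num⟩
    · exact ⟨-1, Or.inr rfl, by rw [h]; norm_num⟩
  have hP1R : (P 1 : ℝ) = r + ε * a := by
    have : (2 : ℝ) * P 1 = r * 2 + a * y₂ := by exact_mod_cast hP1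
    rw [hyε] at this; linarith
  have hQ1R : (Q 1 : ℝ) = s + δ * a := by
    have : (2 : ℝ) * Q 1 = s * 2 + a * z₀ := by exact_mod_cast hQ1
    rw [hzδ] at this; linarith
  obtain ⟨hα1, hfb, hPl, hplow, hplow2⟩ := aux_seq a b r ε haR (by linarith) hrpos hrR hε
    (fun n => (P n : ℝ)) (by simp [hP0]) hP1R (fun i => by simp [hPrec]) l hl α _ hα rfl
  obtain ⟨hβ1, hfc, hQm, hqlow, hqlow2⟩ := aux_seq a c s δ haR hacR hsposR hsR hδ
    (fun n => (Q n : ℝ)) (by simp [hQ0]) hQ1R (fun i => by simp [hQrec]) m hm β _ hβ rfl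
  have he2 : √(a : ℝ) ^ 2 = a := Real.sq_sqrt (by linarith)
  have hf2 : √(b : ℝ) ^ 2 = b := Real.sq_sqrt (by linarith)
  have hg2 : √(c : ℝ) ^ 2 = c := Real.sq_sqrt (by linarith)
  have he1 : 1 ≤ √(a : ℝ) := by rw [Real.one_le_sqrt]; exact haR
  have hgf : √(c : ℝ) < √(b : ℝ) := Real.sqrt_lt_sqrt (by linarith) hcbR
  have hw : 2.25 * √(a : ℝ) < √(b : ℝ) := by
    apply lt_of_pow_lt_pow_left₀ 2 (by linarith)
    rw [mul_pow, he2, hf2]; linarith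
  push_cast at hγ'
  rw [hyε, hzδ] at hγ'
  beta_reduce at hPl hQm
  generalize √(a : ℝ) = e at *
  generalize √(b : ℝ) = f at *
  generalize √(c : ℝ) = g at *
  have hf : 0 < f := by linarith
  have hg : 0 < g := by linarith
  have heg : e ^ 2 + 1 < e * g := by
    apply lt_of_pow_lt_pow_left₀ 2 (by positivity)
    rw [mul_pow, he2, hg2]; exact hintR
  have hu : 0 < f + ε * e := by rcases hε with h | h <;> rw [h] <;> linarith
  have hv : 0 < g + δ * e := by rcases hδ with h | h <;> rw [h] <;> linarith
  have hΛ2 : Λ' = Real.log (((g + δ * e) / g * β ^ m) / ((f + ε * e) / f * α ^ l)) := by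
    have hratio : ((g + δ * e) / g * β ^ m) / ((f + ε * e) / f * α ^ l) = β ^ m / α ^ l * γ' := by
      have : 2 * ε * e + 2 * f ≠ 0 := by linarith
      have hα0 : α ≠ 0 := by linarith
      have := hu.ne'
      rw [hγ', show 2 * ε * e + 2 * f = 2 * (f + ε * e) by ring,
        show 2 * δ * e + 2 * g = 2 * (g + δ * e) by ring]
      generalize f + ε * e = U at *
      field_simp
    have hγ0 : 0 < γ' := by
      rw [hγ', show 2 * ε * e + 2 * f = 2 * (f + ε * e) by ring,
        show 2 * δ * e + 2 * g = 2 * (g + δ * e) by ring]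
      positivity
    have : 0 < α := by linarith
    have : 0 < β := by linarith
    rw [hratio, Real.log_mul (by positivity) hγ0.ne', Real.log_div (by positivity) (by positivity),
      Real.log_pow, Real.log_pow, hΛ']
  have hα0 : 0 < α := by linarith
  have hp1 : 1 < (f + ε * e) / f * α ^ l := by
    refine lt_of_lt_of_le ?_ hplow2
    have : e * g ≤ e * f := by gcongr
    linarith [mul_sub e f e, sq e]
  have hq1 : 1 < (g + δ * e) / g * β ^ m := by
    refine lt_of_lt_of_le ?_ hqlow2
    linarith [mul_sub e g e, sq e]
  have hlow0 : 0 < (f - e) / f * α ^ l := by positivity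
  rw [heq, hQm] at hPl
  generalize (f + ε * e) / f * α ^ l = p at *
  generalize (g + δ * e) / g * β ^ m = q at *
  have ha0 : (0 : ℝ) < a := by linarith
  have hb0 : (0 : ℝ) < b := by linarith
  have hc0 : (0 : ℝ) < c := by linarith
  have hC : 0 < 1 - (a : ℝ) / c := by rw [sub_pos, div_lt_one hc0]; exact hacR
  have hC1 : 0 < (a : ℝ) / c := by positivity
  have hCA : 1 - (a : ℝ) / c < 1 - a / b := by
    have : (a : ℝ) / b < a / c := by gcongr
    linarith
  have hpq1 : 1 < p * q := one_lt_mul_of_lt_of_le hp1 hq1.le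
  obtain ⟨hlt, hup⟩ := aux_core p q _ _ (by linarith) (by linarith) hC hCA (by linarith) hPl.symm
  have hp0 : 0 < p := by linarith
  have hqp : 1 < q / p := by rwa [one_lt_div hp0]
  rw [hΛ2]
  refine ⟨Real.log_pos hqp, ?_⟩
  have h1 := Real.log_le_sub_one_of_pos (show 0 < q / p by linarith)
  refine lt_of_le_of_lt h1 (lt_of_lt_of_le hup ?_)
  have hA : 0 < 1 - (a : ℝ) / b := by linarith
  calc (1 - (a : ℝ) / b) / p ^ 2 ≤ (1 - (a : ℝ) / b) / ((f - e) / f * α ^ l) ^ 2 := by gcongr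
    _ = ((f + e) / (f - e)) / α ^ (2 * l) := by
      rw [← he2, ← hf2, pow_mul']
      field_simp
      ring
    _ ≤ _ := by
      gcongr
      rw [div_le_iff₀ hfb]; linarith
end

section
/- Let k ∈ {7, 8, 10, 11, 12, 13} and let a be a positive integer with k·a² + 4 = r² a perfect square. Set b = ka and let c be one of c₁⁺ = a + b + 2r, c₂⁺ = (ab+4)(a+b+2r) − 4r, c₂⁻ = (ab+4)(a+b−2r) + 4r; let s, t be the positive integers with ac + 4 = s² and bc + 4 = t². If the equation P_l = Q_m has a solution (l, m) of Type 1 with m ≥ 3, then 0 < Λ < 2.6·β^{−2m}; if it has a solution (l, m) of Type 2 with m ≥ 3, then 0 < Λ < 1.5·a²·β^{−2m}. -/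
set_option maxHeartbeats 2000000

lemma closed_form (P : ℕ → ℤ) (x y a r : ℤ) (D : ℝ) (hD : 0 < D) (hDr : D ^ 2 + 4 = (r : ℝ) ^ 2)
    (h0 : P 0 = x) (h1 : 2 * P 1 = r * x + a * y)
    (hrec : ∀ i : ℕ, P (i + 2) = r * P (i + 1) - P i) (i : ℕ) :
    2 * (P i : ℝ) = (x + y * (a / D)) * (((r : ℝ) + D) / 2) ^ i
      + (x - y * (a / D)) * (((r : ℝ) - D) / 2) ^ i := by
  induction i using Nat.twoStepInduction with
  | zero => rw [h0]; simp; ring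
  | one =>
    have : 2 * (P 1 : ℝ) = r * x + a * y := by exact_mod_cast h1
    rw [this]; field_simp; ring
  | more n ih0 ih1 =>
    have e : (P (n + 2) : ℝ) = r * P (n + 1) - P n := by exact_mod_cast hrec n
    have e1 : ((((r : ℝ) + D) / 2)) ^ 2 = r * (((r : ℝ) + D) / 2) - 1 := by
      linear_combination (1 / 4) * hDr
    have e2 : ((((r : ℝ) - D) / 2)) ^ 2 = r * (((r : ℝ) - D) / 2) - 1 := by
      linear_combination (1 / 4) * hDr
    have : 2 * (P (n + 2) : ℝ) = r * (2 * P (n + 1)) - 2 * P n := by rw [e]; ring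
    rw [this, ih0, ih1]
    generalize ((r : ℝ) + D) / 2 = A at *
    generalize ((r : ℝ) - D) / 2 = B at *
    rw [pow_add A n 2, pow_add B n 2, e1, e2]; ring

lemma core (p q U V : ℝ) (hp : 0 < p) (hq : 0 < q) (hU : 0 < U) (hUV : U < V) (hV : V < 4)
    (hpq : 4 ≤ p * q) (h : p + U / p = q + V / q) :
    0 < Real.log (p / q) ∧ Real.log (p / q) < V / q ^ 2 ∧
    Real.log (p / q) < (V - U + 16 / q ^ 2) / q ^ 2 := by
  have h1 : (p - q) * (p * q - U) = p * (V - U) := by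
    field_simp at h
    linarith
  have h2 : q < p := by
    by_contra hc
    have : 0 < p * (V - U) := mul_pos hp (by linarith)
    nlinarith [mul_nonneg (sub_nonneg.2 (not_lt.1 hc)) (by linarith : 0 ≤ p * q - U)]
  have h3 : 1 < p / q := by rwa [one_lt_div hq]
  have h4 := Real.log_lt_sub_one_of_pos (by linarith : 0 < p / q) h3.ne'
  have h5 : p / q - 1 = (V - U * (q / p)) / q ^ 2 := by
    field_simp
    linarith
  have hqp : 0 < q / p := div_pos hq hp
  refine ⟨Real.log_pos h3, ?_, ?_⟩
  · refine h4.trans_le ?_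
    rw [h5]
    have := mul_pos hU hqp
    gcongr
    linarith
  · refine h4.trans_le ?_
    rw [h5]
    have h6 : U * (1 - q / p) ≤ 16 / q ^ 2 := by
      have e : 1 - q / p = (p - q) / p := by field_simp
      have e2 : p - q ≤ 4 / q := by
        have : 0 < U / p := div_pos hU hp
        have : V / q ≤ 4 / q := by gcongr
        linarith
      have e3 : (p - q) / p ≤ 4 / q ^ 2 := by
        calc (p - q) / p ≤ (4 / q) / q := by gcongr
          _ = 4 / q ^ 2 := by field_simp
      rw [e]
      calc U * ((p - q) / p) ≤ 4 * (4 / q ^ 2) := by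
            apply mul_le_mul (by linarith) e3 _ (by norm_num)
            exact div_nonneg (by linarith) hp.le
        _ = _ := by ring
    gcongr
    linarith

lemma int_facts (k a r b c s : ℤ)
    (hk : k ∈ ({7, 8, 10, 11, 12, 13} : Set ℤ)) (ha : 0 < a) (hr : 0 < r)
    (hr2 : k * a ^ 2 + 4 = r ^ 2) (hb : b = k * a)
    (hc : c = a + b + 2 * r ∨ c = (a * b + 4) * (a + b + 2 * r) - 4 * r ∨
          c = (a * b + 4) * (a + b - 2 * r) + 4 * r)
    (hs : 0 < s) (hs2 : a * c + 4 = s ^ 2) :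
    7 ≤ k ∧ k ≤ 13 ∧ 12 ≤ k * a ^ 2 ∧ 4 ≤ r ∧ b < c ∧ 13 * a ≤ c ∧ a + r ≤ s := by
  have k7 : 7 ≤ k := by simp at hk; omega
  have k13 : k ≤ 13 := by simp at hk; omega
  have h12 : 12 ≤ k * a ^ 2 := by
    rcases (by omega : a = 1 ∨ 2 ≤ a) with h | h
    · subst h
      by_contra hh
      have : r ≤ 3 := by nlinarith
      have : r ^ 2 ≤ 9 := by nlinarith
      linarith
    · nlinarith
  have r4 : 4 ≤ r := by nlinarith
  have hra : 5 * a ≤ 2 * r := by nlinarith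
  have hrk : 2 * r ≤ b := by
    have : (2 * r) ^ 2 ≤ b ^ 2 := by
      rw [hb]; nlinarith [mul_le_mul_of_nonneg_right k7 (by linarith : 0 ≤ k * a ^ 2)]
    have hb0 : 0 ≤ b := by rw [hb]; positivity
    exact abs_le_of_sq_le_sq' this hb0 |>.2
  have hab : a * b + 4 = r ^ 2 := by rw [hb]; linarith
  have hcc : a + b + 2 * r ≤ c := by
    rcases hc with h | h | h
    · exact h.ge
    · rw [h, hab]
      have : 16 ≤ r ^ 2 := by nlinarith
      nlinarith
    · rw [h]
      have hb0 : 0 ≤ b := by linarith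
      have : (a * b + 4) * a ≤ (a * b + 4) * (a + b - 2 * r) := by
        apply mul_le_mul_of_nonneg_left (by linarith) (by positivity)
      have : 1 * b ≤ a ^ 2 * b := by
        apply mul_le_mul_of_nonneg_right _ hb0
        nlinarith
      nlinarith
  refine ⟨k7, k13, h12, r4, by linarith, by nlinarith, ?_⟩
  have : (a + r) ^ 2 ≤ s ^ 2 := by
    nlinarith
  exact abs_le_of_sq_le_sq' this hs.le |>.2

/-- For `k ∈ {7,8,10,11,12,13}`, `b = ka` and `c ∈ {c₁⁺, c₂⁺, c₂⁻}`: if `P_l = Q_m` has a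
solution `(l, m)` of Type 1 with `m ≥ 3`, then `0 < Λ < 2.6·β^{−2m}`; if it has a solution
of Type 2 with `m ≥ 3`, then `0 < Λ < 1.5·a²·β^{−2m}`, where
`Λ = l·log α − m·log β + log γ`. -/
theorem linear_form_bound_c1_plus_c2
    (k a r b c s t : ℤ)
    (hk : k ∈ ({7, 8, 10, 11, 12, 13} : Set ℤ)) (ha : 0 < a) (hr : 0 < r)
    (hr2 : k * a ^ 2 + 4 = r ^ 2) (hb : b = k * a)
    (hc : c = a + b + 2 * r ∨ c = (a * b + 4) * (a + b + 2 * r) - 4 * r ∨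
          c = (a * b + 4) * (a + b - 2 * r) + 4 * r)
    (hs : 0 < s) (hs2 : a * c + 4 = s ^ 2) (ht : 0 < t) (ht2 : b * c + 4 = t ^ 2)
    (x₂ y₂ x₀ z₀ : ℤ)
    (hx₂ : x₂ = 2) (hy₂ : y₂ = 2 ∨ y₂ = -2)
    (P Q : ℕ → ℤ)
    (hP0 : P 0 = x₂) (hP1 : 2 * P 1 = r * x₂ + a * y₂)
    (hPrec : ∀ i : ℕ, P (i + 2) = r * P (i + 1) - P i)
    (hQ0 : Q 0 = x₀) (hQ1 : 2 * Q 1 = s * x₀ + a * z₀)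
    (hQrec : ∀ i : ℕ, Q (i + 2) = s * Q (i + 1) - Q i)
    (l m : ℕ)
    (α β γ Λ : ℝ)
    (hα : α = ((r : ℝ) + Real.sqrt ((a : ℝ) * (b : ℝ))) / 2)
    (hβ : β = ((s : ℝ) + Real.sqrt ((a : ℝ) * (c : ℝ))) / 2)
    (hγ : γ = (Real.sqrt (c : ℝ) * ((y₂ : ℝ) * Real.sqrt (a : ℝ) + (x₂ : ℝ) * Real.sqrt (b : ℝ))) /
              (Real.sqrt (b : ℝ) * ((z₀ : ℝ) * Real.sqrt (a : ℝ) + (x₀ : ℝ) * Real.sqrt (c : ℝ))))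
    (hΛ : Λ = (l : ℝ) * Real.log α - (m : ℝ) * Real.log β + Real.log γ)
    (hm : 3 ≤ m) (heq : P l = Q m) :
    ((x₀ = 2 ∧ (z₀ = 2 ∨ z₀ = -2)) → 0 < Λ ∧ Λ < 2.6 / β ^ (2 * m)) ∧
    ((x₀ = r ∧ (z₀ = t ∨ z₀ = -t)) → 0 < Λ ∧ Λ < 1.5 * (a : ℝ) ^ 2 / β ^ (2 * m)) := by
  obtain ⟨k7, k13, h12, r4, hbc, h13, hsr⟩ := int_facts k a r b c s hk ha hr hr2 hb hc hs hs2
  have hb0 : 0 < b := by rw [hb]; positivity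
  have hc0 : 0 < c := by linarith
  have aR : (0 : ℝ) < a := by exact_mod_cast ha
  have a1 : (1 : ℝ) ≤ a := by exact_mod_cast ha
  have bR : (0 : ℝ) < b := by exact_mod_cast hb0
  have cR : (0 : ℝ) < c := by exact_mod_cast hc0
  have k7R : (7 : ℝ) ≤ k := by exact_mod_cast k7
  have k13R : (k : ℝ) ≤ 13 := by exact_mod_cast k13
  have r4R : (4 : ℝ) ≤ r := by exact_mod_cast r4
  have h12R : (12 : ℝ) ≤ k * a ^ 2 := by exact_mod_cast h12
  have h13R : 13 * (a : ℝ) ≤ c := by exact_mod_cast h13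
  have hsrR : (a : ℝ) + r ≤ s := by exact_mod_cast hsr
  have hbcR : (b : ℝ) < c := by exact_mod_cast hbc
  have hbR : (b : ℝ) = k * a := by exact_mod_cast hb
  have hr2R : (k : ℝ) * a ^ 2 + 4 = r ^ 2 := by exact_mod_cast hr2
  have hs2R : (a : ℝ) * c + 4 = s ^ 2 := by exact_mod_cast hs2
  have ht2R : (b : ℝ) * c + 4 = t ^ 2 := by exact_mod_cast ht2
  have tR : (0 : ℝ) < t := by exact_mod_cast ht
  have hD : 0 < √((a : ℝ) * b) := Real.sqrt_pos.2 (by positivity)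
  have hE : 0 < √((a : ℝ) * c) := Real.sqrt_pos.2 (by positivity)
  have hD2 : √((a : ℝ) * b) ^ 2 = a * b := Real.sq_sqrt (by positivity)
  have hE2 : √((a : ℝ) * c) ^ 2 = a * c := Real.sq_sqrt (by positivity)
  have cfP := closed_form P x₂ y₂ a r _ hD (by rw [hD2, hbR]; linarith) hP0 hP1 hPrec l
  have cfQ := closed_form Q x₀ z₀ a s _ hE (by rw [hE2]; linarith) hQ0 hQ1 hQrec m
  have hγ' : γ = (x₂ + y₂ * (a / √((a : ℝ) * b))) / (x₀ + z₀ * (a / √((a : ℝ) * c))) := by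
    have e1 : (a : ℝ) / √((a : ℝ) * b) = √(a : ℝ) / √(b : ℝ) := by
      rw [Real.sqrt_mul aR.le]
      have := Real.sqrt_pos.2 aR
      have := Real.sqrt_pos.2 bR
      field_simp
      rw [Real.sq_sqrt aR.le]
    have e2 : (a : ℝ) / √((a : ℝ) * c) = √(a : ℝ) / √(c : ℝ) := by
      rw [Real.sqrt_mul aR.le]
      have := Real.sqrt_pos.2 aR
      have := Real.sqrt_pos.2 cR
      field_simp
      rw [Real.sq_sqrt aR.le]
    rw [hγ, e1, e2]
    have h1 := Real.sqrt_pos.2 bR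
    have h2 := Real.sqrt_pos.2 cR
    have e3 : (x₂ : ℝ) + y₂ * (√(a : ℝ) / √(b : ℝ)) = (y₂ * √(a : ℝ) + x₂ * √(b : ℝ)) / √(b : ℝ) := by
      field_simp; ring
    have e4 : (x₀ : ℝ) + z₀ * (√(a : ℝ) / √(c : ℝ)) = (z₀ * √(a : ℝ) + x₀ * √(c : ℝ)) / √(c : ℝ) := by
      field_simp; ring
    rw [e3, e4, div_div_div_eq]
    ring
  have hu2 : ((a : ℝ) / √((a : ℝ) * b)) ^ 2 = 1 / k := by
    rw [div_pow, hD2, hbR]; field_simp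
  have hv2 : ((a : ℝ) / √((a : ℝ) * c)) ^ 2 = a / c := by
    rw [div_pow, hE2]; field_simp
  have hu0 : 0 < (a : ℝ) / √((a : ℝ) * b) := by positivity
  have hv0 : 0 < (a : ℝ) / √((a : ℝ) * c) := by positivity
  have hα1 : α * (((r : ℝ) - √((a : ℝ) * b)) / 2) = 1 := by
    rw [hα]; rw [hbR] at hD2 ⊢; linear_combination (1 / 4) * (-hD2 - hr2R)
  have hβ1 : β * (((s : ℝ) - √((a : ℝ) * c)) / 2) = 1 := by
    rw [hβ]; linear_combination (1 / 4) * (-hE2 - hs2R)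
  have hαge : 1 ≤ α := by rw [hα]; linarith
  have hβge : (r : ℝ) + 1 / 2 ≤ β := by
    have : (s : ℝ) - 1 ≤ √((a : ℝ) * c) := by
      apply Real.le_sqrt_of_sq_le
      linarith
    rw [hβ]; linarith
  rw [← hα] at cfP
  rw [← hβ] at cfQ
  have hα2 : ((r : ℝ) - √((a : ℝ) * b)) / 2 = α⁻¹ := eq_inv_of_mul_eq_one_right hα1
  have hβ2 : ((s : ℝ) - √((a : ℝ) * c)) / 2 = β⁻¹ := eq_inv_of_mul_eq_one_right hβ1
  rw [hα2] at cfP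
  rw [hβ2] at cfQ
  generalize (a : ℝ) / √((a : ℝ) * b) = u at *
  generalize (a : ℝ) / √((a : ℝ) * c) = v at *
  have hac : (a : ℝ) / c ≤ 1 / 13 := by rw [div_le_div_iff₀ cR (by norm_num)]; linarith
  have hk17 : 1 / (k : ℝ) ≤ 1 / 7 := by gcongr
  have hkac : (a : ℝ) / c < 1 / k := by
    rw [div_lt_div_iff₀ cR (by linarith)]; linarith
  have hu : u < 0.38 := lt_of_pow_lt_pow_left₀ 2 (by norm_num) (by rw [hu2]; norm_num at hk17 ⊢; linarith)
  have hv : v < 0.28 := lt_of_pow_lt_pow_left₀ 2 (by norm_num) (by rw [hv2]; norm_num at hac ⊢; linarith)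
  have hp0 : 1.2 ≤ (x₂ : ℝ) + y₂ * u := by
    rw [hx₂]; rcases hy₂ with h | h <;> rw [h] <;> push_cast <;> linarith
  have hU : ((x₂ : ℝ) + y₂ * u) * (x₂ - y₂ * u) = 4 * (1 - u ^ 2) := by
    rw [hx₂]; rcases hy₂ with h | h <;> rw [h] <;> push_cast <;> ring
  have hαl : 1 ≤ α ^ l := one_le_pow₀ hαge
  have hβm3 : β ^ 3 ≤ β ^ m := pow_le_pow_right₀ (by linarith) hm
  have hβpos : 0 < β := by linarith
  have key : ∀ F : ℝ, F = x₀ + z₀ * v → 0 < F → F * (x₀ - z₀ * v) = 4 * (1 - v ^ 2) →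
      4 ≤ F * β ^ m →
      0 < Λ ∧ Λ < 4 * (1 - v ^ 2) / (F * β ^ m) ^ 2 ∧
      Λ < (4 * (1 - v ^ 2) - 4 * (1 - u ^ 2) + 16 / (F * β ^ m) ^ 2) / (F * β ^ m) ^ 2 := by
    intro F hF hF0 hFV hF4
    have hβm : 0 < β ^ m := by positivity
    have hp0' : 0 < (x₂ : ℝ) + y₂ * u := by linarith
    have hα0 : 0 < α ^ l := by linarith
    have hΛ' : Λ = Real.log (((x₂ + y₂ * u) * α ^ l) / (F * β ^ m)) := by
      rw [hΛ, hγ', ← hF, Real.log_div hp0'.ne' hF0.ne',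
        Real.log_div (mul_pos hp0' hα0).ne' (mul_pos hF0 hβm).ne',
        Real.log_mul hp0'.ne' hα0.ne',
        Real.log_mul hF0.ne' hβm.ne', Real.log_pow, Real.log_pow]
      ring
    rw [hΛ']
    have hpp : 1.2 ≤ (x₂ + y₂ * u) * α ^ l :=
      hp0.trans (le_mul_of_one_le_right (by linarith) hαl)
    apply core
    · linarith
    · positivity
    · linarith
    · linarith
    · linarith [pow_pos hv0 2]
    · calc (4 : ℝ) ≤ 1 * (F * β ^ m) := by linarith
        _ ≤ _ := by gcongr; linarith
    · have e1 : 4 * (1 - u ^ 2) / ((x₂ + y₂ * u) * α ^ l) = (x₂ - y₂ * u) * α⁻¹ ^ l := by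
        rw [← hU, inv_pow]
        have : (x₂ : ℝ) + y₂ * u ≠ 0 := by linarith
        field_simp
      have e2 : 4 * (1 - v ^ 2) / (F * β ^ m) = (x₀ - z₀ * v) * β⁻¹ ^ m := by
        rw [← hFV, inv_pow]
        field_simp
      rw [e1, e2, hF, ← cfP, ← cfQ, heq]
  have hβ20 : 20 ≤ β ^ 2 := by
    have : (4.5 : ℝ) ^ 2 ≤ β ^ 2 := by gcongr; linarith
    norm_num at this; linarith
  have hβ3r : 20 * (r : ℝ) ≤ β ^ 3 := by
    have : β ^ 3 = β ^ 2 * β := by ring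
    rw [this]; apply mul_le_mul hβ20 (by linarith) (by linarith) (by positivity)
  constructor
  · rintro ⟨hx, hz⟩
    have hF : 2 * (1 - v) ≤ (x₀ : ℝ) + z₀ * v := by
      rw [hx]; rcases hz with h | h <;> rw [h] <;> push_cast <;> linarith
    have hF0 : 0 < (x₀ : ℝ) + z₀ * v := by linarith
    obtain ⟨h1, h2, -⟩ := key _ rfl hF0
      (by rw [hx]; rcases hz with h | h <;> rw [h] <;> push_cast <;> ring)
      (by
        have e : (1 : ℝ) * 80 ≤ ((x₀ : ℝ) + z₀ * v) * β ^ m :=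
          mul_le_mul (by linarith) (by linarith) (by norm_num) hF0.le
        linarith)
    refine ⟨h1, h2.trans_le ?_⟩
    generalize (x₀ : ℝ) + z₀ * v = F at *
    have : 4 * (1 - v ^ 2) / F ^ 2 ≤ 2.6 := by
      rw [div_le_iff₀ (by positivity)]
      have : (2 * (1 - v)) ^ 2 ≤ F ^ 2 := by
        apply pow_le_pow_left₀ (by linarith) hF
      have h7 : 0 ≤ (1 - v) * (1.6 - 3.6 * v) := mul_nonneg (by linarith) (by linarith)
      linarith
    calc 4 * (1 - v ^ 2) / (F * β ^ m) ^ 2 = 4 * (1 - v ^ 2) / F ^ 2 / β ^ (2 * m) := by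
          rw [mul_pow, div_div, ← pow_mul, mul_comm m 2]
      _ ≤ _ := by gcongr
  · rintro ⟨hx, hz⟩
    have hac' : (a : ℝ) = v ^ 2 * c := by rw [hv2]; field_simp
    have hτ : ((t : ℝ) * v) ^ 2 = r ^ 2 - 4 * (1 - v ^ 2) := by
      rw [mul_pow, ← ht2R, ← hr2R]
      have hb' : (b : ℝ) * (v ^ 2 * c) = k * a ^ 2 := by rw [← hac', hbR]; ring
      linear_combination hb'
    have hτ0 : 0 < (t : ℝ) * v := by positivity
    have hτr : (t : ℝ) * v < r := lt_of_pow_lt_pow_left₀ 2 (by linarith) (by linarith)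
    have hF : 2 * (1 - v ^ 2) / r ≤ (x₀ : ℝ) + z₀ * v := by
      have : 2 * (1 - v ^ 2) / r ≤ r - t * v := by
        rw [div_le_iff₀ (by linarith)]
        have h7 : 0 ≤ ((r : ℝ) - t * v) ^ 2 := sq_nonneg _
        linarith
      rw [hx]; rcases hz with h | h <;> rw [h] <;> push_cast <;> linarith
    have hw : (12 / 13 : ℝ) ≤ 1 - v ^ 2 := by linarith
    have hF0 : 0 < (x₀ : ℝ) + z₀ * v := lt_of_lt_of_le (by apply div_pos <;> linarith) hF
    have hq : 34 ≤ ((x₀ : ℝ) + z₀ * v) * β ^ m := by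
      have : 2 * (12 / 13) / (r : ℝ) * (20 * r) ≤ ((x₀ : ℝ) + z₀ * v) * β ^ m := by
        apply mul_le_mul _ (hβ3r.trans hβm3) (by positivity) hF0.le
        refine le_trans ?_ hF
        gcongr
      have e : 2 * (12 / 13) / (r : ℝ) * (20 * r) = 2 * (12 / 13) * 20 := by field_simp
      rw [e] at this
      linarith
    obtain ⟨h1, -, h2⟩ := key _ rfl hF0
      (by
        rw [hx]; rcases hz with h | h <;> rw [h] <;> push_cast <;> linear_combination -hτ)
      (by linarith)
    refine ⟨h1, h2.trans_le ?_⟩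
    generalize (x₀ : ℝ) + z₀ * v = F at *
    have hbm : 0 < β ^ m := by positivity
    have hQ : 16 / (F * β ^ m) ^ 2 ≤ 16 / 34 ^ 2 := by gcongr
    have hmain : (4 * (1 - v ^ 2) - 4 * (1 - u ^ 2) + 16 / (F * β ^ m) ^ 2) / F ^ 2
        ≤ 1.5 * (a : ℝ) ^ 2 := by
      rw [div_le_iff₀ (by positivity)]
      have hF2 : (2 * (1 - v ^ 2) / r) ^ 2 ≤ F ^ 2 :=
        pow_le_pow_left₀ (div_nonneg (by linarith) (by linarith)) hF 2
      have hrk : (r : ℝ) ^ 2 ≤ (4 / 3) * (k * a ^ 2) := by linarith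
      have h3 : 3 * (1 - v ^ 2) ^ 2 / k ≤ a ^ 2 * F ^ 2 := by
        calc 3 * (1 - v ^ 2) ^ 2 / k ≤ a ^ 2 * (2 * (1 - v ^ 2) / r) ^ 2 := by
              rw [div_pow, ← mul_div_assoc, div_le_div_iff₀ (by linarith) (by positivity)]
              linarith [mul_le_mul_of_nonneg_left hrk (sq_nonneg (1 - v ^ 2))]
          _ ≤ _ := by gcongr
      have h4 : 4 * (1 - v ^ 2) - 4 * (1 - u ^ 2) + 16 / 34 ^ 2 ≤ 1.5 * (3 * (1 - v ^ 2) ^ 2 / k) := by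
        have hk13' : 1 / 13 ≤ 1 / (k : ℝ) := by gcongr
        have e : 3 * (1 - v ^ 2) ^ 2 / (k : ℝ) = 3 * (1 - v ^ 2) ^ 2 * (1 / k) := by ring
        rw [e, hu2]
        generalize 1 / (k : ℝ) = κ at *
        generalize v ^ 2 = X at *
        have h7 : 0 ≤ X ^ 2 * κ := mul_nonneg (sq_nonneg X) (by linarith)
        have hX : 0 < X := by rw [hv2]; positivity
        have h8 : X * κ ≤ X * (1 / 7) := mul_le_mul_of_nonneg_left hk17 hX.le
        norm_num
        linarith
      linarith
    calc (4 * (1 - v ^ 2) - 4 * (1 - u ^ 2) + 16 / (F * β ^ m) ^ 2) / (F * β ^ m) ^ 2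
        = (4 * (1 - v ^ 2) - 4 * (1 - u ^ 2) + 16 / (F * β ^ m) ^ 2) / F ^ 2 / β ^ (2 * m) := by
          rw [mul_pow F (β ^ m) 2, div_div, ← pow_mul, mul_comm m 2]
      _ ≤ _ := by gcongr
end

section
/- Let k ∈ {7, 8, 10, 11, 12, 13} and let a ≥ 10864 be a positive integer with k·a² + 4 = r² a perfect square. Set b = ka, c = a + b − 2r and s = r − a, and assume a < c < b. Consider a solution of Type 1, i.e. (x₂, y₂) = (2, ±2) and (x₀, z₀) = (2, ±2). If P_l = Q_m for some integers l ≥ 1 and m ≥ 1, then l ≤ m. -/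
theorem rec_mono_aux (r : ℤ) (hr : 2 ≤ r) (P : ℕ → ℤ) (h0 : 0 < P 0) (h1 : P 0 ≤ P 1)
    (hrec : ∀ i : ℕ, P (i + 2) = r * P (i + 1) - P i) (n : ℕ) : 0 < P n ∧ P n ≤ P (n + 1) := by
  induction n with
  | zero => exact ⟨h0, h1⟩
  | succ n ih =>
    obtain ⟨h, h'⟩ := ih
    refine ⟨by linarith, ?_⟩
    rw [show n + 1 + 1 = n + 2 from rfl, hrec n]
    nlinarith

/-- For `k ∈ {7,8,10,11,12,13}`, `a ≥ 10864`, `b = ka`, `c = c₁⁻ = a + b − 2r`, `s = r − a`,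
with a solution of Type 1: if `P_l = Q_m` with `l ≥ 1` and `m ≥ 1`, then `l ≤ m`. -/
theorem index_inequality_c1_minus
    (k a r b c s : ℤ)
    (hk : k ∈ ({7, 8, 10, 11, 12, 13} : Set ℤ)) (ha : 0 < a) (ha2 : 10864 ≤ a)
    (hr : 0 < r) (hr2 : k * a ^ 2 + 4 = r ^ 2) (hb : b = k * a)
    (hc : c = a + b - 2 * r) (hs : s = r - a) (hac : a < c) (hcb : c < b)
    (x₂ y₂ x₀ z₀ : ℤ)
    (hx₂ : x₂ = 2) (hy₂ : y₂ = 2 ∨ y₂ = -2) (hx₀ : x₀ = 2) (hz₀ : z₀ = 2 ∨ z₀ = -2)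
    (P Q : ℕ → ℤ)
    (hP0 : P 0 = x₂) (hP1 : 2 * P 1 = r * x₂ + a * y₂)
    (hPrec : ∀ i : ℕ, P (i + 2) = r * P (i + 1) - P i)
    (hQ0 : Q 0 = x₀) (hQ1 : 2 * Q 1 = s * x₀ + a * z₀)
    (hQrec : ∀ i : ℕ, Q (i + 2) = s * Q (i + 1) - Q i)
    (l m : ℕ) (hl : 1 ≤ l) (hm : 1 ≤ m) (heq : P l = Q m) :
    l ≤ m := by
  have hk7 : 7 ≤ k := by
    simp only [Set.mem_insert_iff, Set.mem_singleton_iff] at hk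
    omega
  have hra : 5 * a < 2 * r := by
    by_contra hcon
    push Not at hcon
    nlinarith [mul_le_mul_of_nonneg_right hk7 (sq_nonneg a)]
  subst hx₂ hx₀ hs
  have hP1l : r - a ≤ P 1 := by rcases hy₂ with h | h <;> subst h <;> linarith
  have hQ1l : r - 2 * a ≤ Q 1 := by rcases hz₀ with h | h <;> subst h <;> linarith
  have hQ1u : Q 1 ≤ r := by rcases hz₀ with h | h <;> subst h <;> linarith
  have hPm := rec_mono_aux r (by linarith) P (by rw [hP0]; norm_num) (by rw [hP0]; linarith) hPrec
  have hQm := rec_mono_aux (r - a) (by linarith) Q (by rw [hQ0]; norm_num)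
    (by rw [hQ0]; linarith) hQrec
  have key : ∀ n : ℕ, Q (n + 1) < P (n + 2) := by
    intro n
    induction n with
    | zero =>
      have := hPrec 0
      simp only [zero_add] at this ⊢
      rw [this, hP0]
      nlinarith
    | succ n ih =>
      have e1 : Q (n + 1 + 1) = _ := hQrec n
      have e2 : P (n + 1 + 2) = r * P (n + 2) - P (n + 1) := hPrec (n + 1)
      rw [e1, e2]
      have q1 := (hQm n).1
      have q2 := (hQm (n + 1)).1
      have p1 := (hPm (n + 2)).1
      have p2 : P (n + 1) ≤ P (n + 2) := (hPm (n + 1)).2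
      have m1 : (r - a) * Q (n + 1) ≤ (r - a) * P (n + 2) :=
        mul_le_mul_of_nonneg_left ih.le (by linarith)
      nlinarith
  by_contra hlt
  push Not at hlt
  have mono : Monotone P := monotone_nat_of_le_succ fun n => (hPm n).2
  obtain ⟨n, rfl⟩ : ∃ n, m = n + 1 := ⟨m - 1, by omega⟩
  have h1 : P (n + 2) ≤ P l := mono (by omega)
  have h2 := key n
  linarith
end

section
/- Let k ∈ {7, 8, 10, 11, 12, 13} and let a ≥ 10864 be a positive integer with k·a² + 4 = r² a perfect square. Set b = ka and let c be one of c₁⁺ = a + b + 2r, c₂⁺ = (ab+4)(a+b+2r) − 4r, c₂⁻ = (ab+4)(a+b−2r) + 4r; let s, t be the positive integers with ac + 4 = s² and bc + 4 = t². If P_l = Q_m has a solution (l, m) (of Type 1 or Type 2) with m ≥ 3, then m ≤ l. -/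
theorem Q_growth (r a s : ℤ) (Q : ℕ → ℤ) (hr : 0 < r) (ha : 0 < a) (hs : r + 1 ≤ s)
    (hQrec : ∀ i : ℕ, Q (i + 2) = s * Q (i + 1) - Q i)
    (h1 : Q 1 ≤ Q 2) (h2 : r + a < Q 2) (n : ℕ) :
    Q (n + 1) ≤ Q (n + 2) ∧ (r + a) * r ^ n < Q (n + 2) := by
  induction n with
  | zero => simpa using ⟨h1, h2⟩
  | succ n ih =>
    obtain ⟨i1, i2⟩ := ih
    have hp : 0 < (r + a) * r ^ n := by positivity
    have e := hQrec (n + 1)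
    have e' : Q (n + 1 + 2) = s * Q (n + 2) - Q (n + 1) := e
    have hge : r * Q (n + 2) ≤ Q (n + 1 + 2) := by
      rw [e']; nlinarith
    refine ⟨?_, ?_⟩
    · show Q (n + 2) ≤ Q (n + 1 + 2)
      nlinarith
    · have : (r + a) * r ^ (n + 1) = r * ((r + a) * r ^ n) := by ring
      rw [this]; nlinarith

theorem P_growth (r a : ℤ) (P : ℕ → ℤ) (hr : 2 ≤ r)
    (hPrec : ∀ i : ℕ, P (i + 2) = r * P (i + 1) - P i)
    (h0 : 0 ≤ P 0) (h1 : P 0 ≤ P 1) (h2 : P 1 ≤ r + a) (n : ℕ) :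
    0 ≤ P n ∧ P n ≤ P (n + 1) ∧ P (n + 1) ≤ (r + a) * r ^ n := by
  induction n with
  | zero => simpa using ⟨h0, h1, h2⟩
  | succ n ih =>
    obtain ⟨i0, i1, i2⟩ := ih
    have e' : P (n + 1 + 1) = r * P (n + 1) - P n := hPrec n
    refine ⟨by linarith, ?_, ?_⟩
    · rw [e']; nlinarith
    · have : (r + a) * r ^ (n + 1) = r * ((r + a) * r ^ n) := by ring
      rw [this, e']; nlinarith

set_option maxHeartbeats 4000000 in
/-- For `k ∈ {7,8,10,11,12,13}`, `a ≥ 10864`, `b = ka` and `c ∈ {c₁⁺, c₂⁺, c₂⁻}`: if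
`P_l = Q_m` has a solution `(l, m)` of Type 1 or Type 2 with `m ≥ 3`, then `m ≤ l`. -/
theorem index_inequality_c1_plus_c2
    (k a r b c s t : ℤ)
    (hk : k ∈ ({7, 8, 10, 11, 12, 13} : Set ℤ)) (ha : 0 < a) (ha2 : 10864 ≤ a)
    (hr : 0 < r) (hr2 : k * a ^ 2 + 4 = r ^ 2) (hb : b = k * a)
    (hc : c = a + b + 2 * r ∨ c = (a * b + 4) * (a + b + 2 * r) - 4 * r ∨
          c = (a * b + 4) * (a + b - 2 * r) + 4 * r)
    (hs : 0 < s) (hs2 : a * c + 4 = s ^ 2) (ht : 0 < t) (ht2 : b * c + 4 = t ^ 2)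
    (x₂ y₂ x₀ z₀ : ℤ)
    (hx₂ : x₂ = 2) (hy₂ : y₂ = 2 ∨ y₂ = -2)
    (htype : (x₀ = 2 ∧ (z₀ = 2 ∨ z₀ = -2)) ∨ (x₀ = r ∧ (z₀ = t ∨ z₀ = -t)))
    (P Q : ℕ → ℤ)
    (hP0 : P 0 = x₂) (hP1 : 2 * P 1 = r * x₂ + a * y₂)
    (hPrec : ∀ i : ℕ, P (i + 2) = r * P (i + 1) - P i)
    (hQ0 : Q 0 = x₀) (hQ1 : 2 * Q 1 = s * x₀ + a * z₀)
    (hQrec : ∀ i : ℕ, Q (i + 2) = s * Q (i + 1) - Q i)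
    (l m : ℕ) (hm : 3 ≤ m) (heq : P l = Q m) :
    m ≤ l := by
  subst hx₂
  have hk7 : 7 ≤ k := by
    simp only [Set.mem_insert_iff, Set.mem_singleton_iff] at hk
    omega
  have hra : 2 * a < r := by nlinarith
  have hb7 : 7 * a ≤ b := by rw [hb]; nlinarith
  have hr3 : a * b + 4 = r ^ 2 := by rw [← hr2, hb]; ring
  have hrb : r < b := by nlinarith
  have hd : 1 ≤ a + b - 2 * r := by
    by_contra h
    have h' : a + b ≤ 2 * r := by omega
    nlinarith [mul_self_le_mul_self (by linarith : 0 ≤ a + b) h']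
  have hab : 10864 * b ≤ a * b := by nlinarith
  -- either the c₁ case or c is big
  have hc' : (c = a + b + 2 * r) ∨ a * b + 4 ≤ c := by
    rcases hc with h | h | h
    · exact Or.inl h
    · right; rw [h]; nlinarith
    · right; rw [h]; nlinarith
  have hcases : (s = r + a ∧ t = b + r) ∨ 2 * r + a + 2 ≤ s := by
    rcases hc' with h | h
    · left
      constructor
      · have : s ^ 2 = (r + a) ^ 2 := by rw [← hs2, h]; linarith [hr3]
        exact (pow_left_inj₀ hs.le (by linarith) two_ne_zero).1 this
      · have : t ^ 2 = (b + r) ^ 2 := by rw [← ht2, h]; linarith [hr3]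
        exact (pow_left_inj₀ ht.le (by linarith) two_ne_zero).1 this
    · right
      have h3 : a * r ^ 2 ≤ s ^ 2 := by rw [← hs2, ← hr3]; nlinarith
      have h4 : (3 * r) ^ 2 ≤ s ^ 2 := by nlinarith [sq_nonneg r]
      have h5 : 3 * r ≤ s := (pow_le_pow_iff_left₀ (by linarith) hs.le two_ne_zero).1 h4
      linarith
  have hsr : r + a ≤ s := by rcases hcases with ⟨h, _⟩ | h <;> linarith
  have hcpos : a < c := by rcases hc' with h | h <;> nlinarith
  have hkey : Q 1 ≤ Q 2 ∧ r + a < Q 2 := by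
    have e : Q 2 = s * Q 1 - Q 0 := hQrec 0
    rcases htype with ⟨h0, hz⟩ | ⟨h0, hz⟩
    · have hq : r ≤ Q 1 := by
        subst h0
        rcases hz with h | h <;> subst h <;> linarith
      have : r * s ≤ Q 1 * s := by nlinarith
      rw [e, hQ0, h0]
      constructor <;> nlinarith
    · have hdiff : (a * t) ^ 2 < (s * r) ^ 2 := by
        have : (s * r) ^ 2 - (a * t) ^ 2 = 4 * (a * c) + 4 * (a * b) + 16 - 4 * a ^ 2 := by
          rw [mul_pow, mul_pow, ← hs2, ← ht2, ← hr3]; ring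
        nlinarith
      have hlt : a * t < s * r := lt_of_pow_lt_pow_left₀ 2 (by positivity) hdiff
      rcases hz with h | h
      · have hq : s * r ≤ 2 * Q 1 := by rw [hQ1, h0, h]; nlinarith
        have hq' : 2 * r ≤ 2 * Q 1 := by nlinarith
        have : r * s ≤ Q 1 * s := by nlinarith
        rw [e, hQ0, h0]
        constructor <;> nlinarith
      · rcases hcases with ⟨hs', ht'⟩ | hs'
        · have hq : Q 1 = 2 := by
            rw [h0, h, hs', ht'] at hQ1
            nlinarith
          rw [e, hQ0, h0, hq, hs']
          constructor <;> linarith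
        · have hq : 1 ≤ Q 1 := by
            rw [h0, h] at hQ1
            nlinarith
          rw [e, hQ0, h0]
          constructor <;> nlinarith
  have hP1' : 2 ≤ P 1 ∧ P 1 ≤ r + a := by
    rcases hy₂ with h | h <;> subst h <;> constructor <;> linarith
  have hPg := P_growth r a P (by linarith) hPrec (by rw [hP0]; norm_num)
    (by rw [hP0]; exact hP1'.1) hP1'.2
  have hmono : Monotone P := monotone_nat_of_le_succ fun n => (hPg n).2.1
  by_contra hlm
  obtain ⟨n, rfl⟩ : ∃ n, m = n + 2 := ⟨m - 2, by omega⟩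
  have hQg := (Q_growth r a s Q hr ha (by linarith) hQrec hkey.1 hkey.2 n).2
  have h1 := hmono (show l ≤ n + 1 by omega)
  have h2 := (hPg n).2.2
  linarith
end
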